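/- arXiv:1111.0986 — 2 statements merged into one kernel-verified Lean document; each statement's English description precedes it below -/
import Mathlib

section
/- For every m ≥ 1, the number of alternating (up-down) permutations of length 2m+1 containing the pattern 321 exactly once is 3(3m+4)(m-1)(2m+2)! / ((m+1)!(m+4)!). -/
/-- `w` is an alternating (up-down) permutation: `w 0 < w 1 > w 2 < ⋯`. -/
def UpDown {n : ℕ} (w : Equiv.Perm (Fin n)) : Prop :=
  ∀ i : ℕ, ∀ h : i + 1 < n,
    if i % 2 = 0 then w ⟨i, Nat.lt_of_succ_lt h⟩ < w ⟨i + 1, h⟩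
    else w ⟨i + 1, h⟩ < w ⟨i, Nat.lt_of_succ_lt h⟩

/-- `w` is a reverse-alternating (down-up) permutation: `w 0 > w 1 < w 2 > ⋯`. -/
def DownUp {n : ℕ} (w : Equiv.Perm (Fin n)) : Prop :=
  ∀ i : ℕ, ∀ h : i + 1 < n,
    if i % 2 = 0 then w ⟨i + 1, h⟩ < w ⟨i, Nat.lt_of_succ_lt h⟩
    else w ⟨i, Nat.lt_of_succ_lt h⟩ < w ⟨i + 1, h⟩

/-- The set of occurrences of the pattern 321 in `w`. -/
def occ321 {n : ℕ} (w : Equiv.Perm (Fin n)) : Set (Fin n × Fin n × Fin n) :=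
  {t | t.1 < t.2.1 ∧ t.2.1 < t.2.2 ∧ w t.2.2 < w t.2.1 ∧ w t.2.1 < w t.1}

/-- The set of occurrences of the pattern 123 in `w`. -/
def occ123 {n : ℕ} (w : Equiv.Perm (Fin n)) : Set (Fin n × Fin n × Fin n) :=
  {t | t.1 < t.2.1 ∧ t.2.1 < t.2.2 ∧ w t.1 < w t.2.1 ∧ w t.2.1 < w t.2.2}


/-!
Build an up-down permutation of odd length by appending two values `p > q` at a time, standardising
along the way. If `v` is appended to `w`, the new occurrences of 321 are the inversions of `w` whose
smaller entry is at least `v`; hence only the *headroom* of `w`, the number of its values above the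
smaller entry of every inversion, matters for what comes next.

As long as 321 is avoided, the appended peak `p` is the maximum, and the headroom `h` is replaced by
one of `1, …, h + 1`, once each. This is the Catalan generating tree; with `C = 1 + X C ^ 2`, its
transfer operator sends `h ↦ [X ^ k] C ^ (h + 1)` to `h ↦ [X ^ (k + 1)] C ^ (h + 1)`.

The single occurrence of 321 is created in one step: either the peak is one below the maximum, or
exactly one inversion lies above the last value. The other steps follow the generating tree, so the
count is a sum of products of Catalan numbers, which the Catalan recurrence evaluates to
`2 C_{m+3} - 6 C_{m+2} + C_{m+1}`.
-/

open Finset Equiv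

section PermSnoc

variable {n : ℕ}

/-- The permutation obtained from `w` by appending the last value `v`: the values of `w` that are
at least `v` are shifted up by one. -/
def permSnoc (w : Perm (Fin n)) (v : Fin (n + 1)) : Perm (Fin (n + 1)) :=
  finSuccEquivLast.trans (w.optionCongr.trans (finSuccEquiv' v).symm)

@[simp]
lemma permSnoc_last (w : Perm (Fin n)) (v : Fin (n + 1)) : permSnoc w v (Fin.last n) = v := by
  simp [permSnoc]

@[simp]
lemma permSnoc_castSucc (w : Perm (Fin n)) (v : Fin (n + 1)) (i : Fin n) :
    permSnoc w v i.castSucc = v.succAbove (w i) := by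
  simp [permSnoc]

lemma permSnoc_bijective (n : ℕ) :
    Function.Bijective fun x : Perm (Fin n) × Fin (n + 1) ↦ permSnoc x.1 x.2 := by
  refine (Fintype.bijective_iff_injective_and_card _).2 ⟨?_, ?_⟩
  · rintro ⟨w, v⟩ ⟨w', v'⟩ (h : permSnoc w v = permSnoc w' v')
    obtain rfl : v = v' := by simpa using DFunLike.congr_fun h (Fin.last n)
    obtain rfl : w = w' :=
      Equiv.ext fun i ↦ by simpa using DFunLike.congr_fun h i.castSucc
    rfl
  · simp [Fintype.card_perm, Nat.factorial_succ, mul_comm]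

lemma sum_perm_fin_succ {M : Type*} [AddCommMonoid M] (f : Perm (Fin (n + 1)) → M) :
    ∑ w, f w = ∑ r : Perm (Fin n), ∑ v : Fin (n + 1), f (permSnoc r v) := by
  rw [← Fintype.sum_prod_type']
  exact ((permSnoc_bijective n).sum_comp f).symm

end PermSnoc

lemma val_succAbove {n : ℕ} (q : Fin (n + 1)) (x : Fin n) :
    (q.succAbove x : ℕ) = if (x : ℕ) < q then (x : ℕ) else x + 1 := by
  simp only [Fin.succAbove, Fin.lt_def, Fin.val_castSucc]
  split_ifs <;> simp

lemma lt_succAbove_iff_val_le {n : ℕ} (q : Fin (n + 1)) (x : Fin n) :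
    q < q.succAbove x ↔ (q : ℕ) ≤ x := by
  rw [Fin.lt_succAbove_iff_le_castSucc, Fin.le_def, Fin.val_castSucc]

lemma sum_fin_filter_Ico {M : Type*} [AddCommMonoid M] {a b n : ℕ} (hb : b ≤ n) (f : ℕ → M) :
    ∑ q ∈ {q : Fin n | a ≤ (q : ℕ) ∧ (q : ℕ) < b}, f q = ∑ i ∈ Ico a b, f i := by
  have himage : map Fin.valEmbedding {q : Fin n | a ≤ (q : ℕ) ∧ (q : ℕ) < b} = Ico a b := by
    ext i
    simp only [mem_map, mem_filter_univ, Fin.valEmbedding_apply, mem_Ico]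
    exact ⟨by rintro ⟨q, hq, rfl⟩; exact hq, fun hi ↦ ⟨⟨i, by omega⟩, hi, rfl⟩⟩
  rw [← himage, sum_map]
  rfl

lemma card_fin_filter_Ico {a b n : ℕ} (hb : b ≤ n) :
    #{q : Fin n | a ≤ (q : ℕ) ∧ (q : ℕ) < b} = b - a := by
  rw [card_eq_sum_ones, sum_fin_filter_Ico hb fun _ ↦ 1, ← card_eq_sum_ones, Nat.card_Ico]

lemma sum_filter_mem_and {α β M : Type*} [Fintype α] [Fintype β] [DecidableEq α]
    [AddCommMonoid M] (s : Finset α) (P : α → β → Prop) [∀ a, DecidablePred (P a)] (f : α → β → M) :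
    ∑ a, ∑ b with a ∈ s ∧ P a b, f a b = ∑ a ∈ s, ∑ b with P a b, f a b := by
  rw [← sum_subset (subset_univ s) fun a _ ha ↦ by simp [ha]]
  exact sum_congr rfl fun a ha ↦ by simp [ha]

section Occurrences

variable {n : ℕ}

/-- The number of inversions of `w` whose smaller value is at least `v`. These are the pairs that
become occurrences of 321 when the value `v` is appended. -/
def numInvAbove (w : Perm (Fin n)) (v : ℕ) : ℕ :=
  #{p : Fin n × Fin n | p.1 < p.2 ∧ w p.2 < w p.1 ∧ v ≤ w p.2}

lemma numInvAbove_eq_sum (w : Perm (Fin n)) (v : ℕ) :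
    numInvAbove w v = ∑ i, ∑ j, if i < j ∧ w j < w i ∧ v ≤ w j then 1 else 0 := by
  rw [numInvAbove, card_filter, Fintype.sum_prod_type]

lemma numInvAbove_antitone (w : Perm (Fin n)) : Antitone (numInvAbove w) := fun _ _ hab ↦
  card_le_card <| monotone_filter_right _ fun _ _ ⟨hpos, hval, hb⟩ ↦ ⟨hpos, hval, hab.trans hb⟩

lemma numInvAbove_eq_zero_of_le (w : Perm (Fin n)) {v : ℕ} (hv : n ≤ v) : numInvAbove w v = 0 :=
  card_eq_zero.2 <| filter_eq_empty_iff.2 fun p _ h ↦ by have := (w p.2).isLt; omega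

lemma ncard_occ321_eq_sum (w : Perm (Fin n)) :
    (occ321 w).ncard =
      ∑ i, ∑ j, ∑ k, if i < j ∧ j < k ∧ w k < w j ∧ w j < w i then 1 else 0 := by
  have hcoe : occ321 w = ({t : Fin n × Fin n × Fin n |
      t.1 < t.2.1 ∧ t.2.1 < t.2.2 ∧ w t.2.2 < w t.2.1 ∧ w t.2.1 < w t.1} : Finset _) := by
    ext t
    simp [occ321]
  rw [hcoe, Set.ncard_coe_finset, card_filter, Fintype.sum_prod_type]
  simp only [Fintype.sum_prod_type]

lemma ncard_occ321_permSnoc (w : Perm (Fin n)) (v : Fin (n + 1)) :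
    (occ321 (permSnoc w v)).ncard = (occ321 w).ncard + numInvAbove w v := by
  simp only [ncard_occ321_eq_sum, numInvAbove_eq_sum, Fin.sum_univ_castSucc, permSnoc_castSucc,
    permSnoc_last, Fin.castSucc_lt_castSucc_iff, Fin.succAbove_lt_succAbove_iff,
    Fin.castSucc_lt_last, lt_succAbove_iff_val_le, (Fin.le_last _).not_gt, false_and, and_false,
    if_false, sum_const_zero, add_zero, true_and, sum_add_distrib]
  simp only [and_comm]

lemma sum_ite_le_perm_apply (w : Perm (Fin n)) (q : ℕ) :
    ∑ i, (if q ≤ (w i : ℕ) then 1 else 0) = n - q := by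
  rw [Equiv.sum_comp w fun x ↦ if q ≤ (x : ℕ) then 1 else 0, ← card_filter]
  simpa using card_fin_filter_Ico (a := q) (le_refl n)

lemma numInvAbove_permSnoc_of_le (w : Perm (Fin n)) {q : Fin (n + 1)} {v : ℕ} (h : v ≤ q) :
    numInvAbove (permSnoc w q) v = numInvAbove w v + (n - q) := by
  have hval (x : Fin n) : v ≤ (q.succAbove x : ℕ) ↔ v ≤ (x : ℕ) := by
    rw [val_succAbove]; split_ifs <;> omega
  simp only [numInvAbove_eq_sum, Fin.sum_univ_castSucc, permSnoc_castSucc, permSnoc_last,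
    Fin.castSucc_lt_castSucc_iff, Fin.succAbove_lt_succAbove_iff, Fin.castSucc_lt_last,
    lt_succAbove_iff_val_le, (Fin.le_last _).not_gt, false_and, if_false, sum_const_zero, add_zero,
    true_and, sum_add_distrib, hval, h, and_true, sum_ite_le_perm_apply]

lemma numInvAbove_permSnoc_of_lt (w : Perm (Fin n)) {q : Fin (n + 1)} {v : ℕ} (h : q < v) :
    numInvAbove (permSnoc w q) v = numInvAbove w (v - 1) := by
  have hval (x : Fin n) : v ≤ (q.succAbove x : ℕ) ↔ v - 1 ≤ (x : ℕ) := by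
    rw [val_succAbove]; split_ifs <;> omega
  simp only [numInvAbove_eq_sum, Fin.sum_univ_castSucc, permSnoc_castSucc, permSnoc_last,
    Fin.castSucc_lt_castSucc_iff, Fin.succAbove_lt_succAbove_iff, (Fin.le_last _).not_gt,
    false_and, if_false, sum_const_zero, add_zero, hval, h.not_ge, and_false]

end Occurrences

section Headroom

variable {n : ℕ}

lemma exists_numInvAbove_eq_zero (w : Perm (Fin n)) : ∃ v, numInvAbove w v = 0 :=
  ⟨n, numInvAbove_eq_zero_of_le w le_rfl⟩

/-- The least `v` such that appending `v` to `w` creates no occurrence of 321: one more than the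
largest smaller entry of an inversion of `w`, or `0` if `w` is the identity. -/
def inversionCeiling (w : Perm (Fin n)) : ℕ := Nat.find (exists_numInvAbove_eq_zero w)

/-- The number of values of `w` that are larger than the smaller entry of every inversion of `w`. It
is the label of `w` in the generating tree. -/
def headroom (w : Perm (Fin n)) : ℕ := n - inversionCeiling w

lemma numInvAbove_eq_zero_iff (w : Perm (Fin n)) (v : ℕ) :
    numInvAbove w v = 0 ↔ inversionCeiling w ≤ v := by
  refine ⟨fun h ↦ Nat.find_min' (exists_numInvAbove_eq_zero w) h, fun h ↦ Nat.eq_zero_of_le_zero ?_⟩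
  calc numInvAbove w v ≤ numInvAbove w (inversionCeiling w) := numInvAbove_antitone w h
    _ = 0 := Nat.find_spec (exists_numInvAbove_eq_zero w)

lemma inversionCeiling_le (w : Perm (Fin n)) : inversionCeiling w ≤ n :=
  (numInvAbove_eq_zero_iff w n).1 (numInvAbove_eq_zero_of_le w le_rfl)

lemma inversionCeiling_eq {w : Perm (Fin n)} {s : ℕ} (h : ∀ v, numInvAbove w v = 0 ↔ s ≤ v) :
    inversionCeiling w = s :=
  eq_of_forall_ge_iff fun v ↦ (numInvAbove_eq_zero_iff w v).symm.trans (h v)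

/-- Append to `w` the new maximum and then the value `q`. -/
def snocPeak (w : Perm (Fin n)) (q : Fin (n + 1)) : Perm (Fin (n + 2)) :=
  permSnoc (permSnoc w (Fin.last n)) q.castSucc

/-- Append to `w` the second largest value and then the value `q`; both lie below the maximum of
`w`. -/
def snocSubpeak (w : Perm (Fin (n + 1))) (q : Fin (n + 1)) : Perm (Fin (n + 3)) :=
  permSnoc (permSnoc w (Fin.last n).castSucc) q.castSucc.castSucc

lemma numInvAbove_snocPeak_of_le (w : Perm (Fin n)) {q : Fin (n + 1)} {v : ℕ} (h : v ≤ q) :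
    numInvAbove (snocPeak w q) v = numInvAbove w v + (n + 1 - q) := by
  rw [snocPeak, numInvAbove_permSnoc_of_le _ (by simpa using h),
    numInvAbove_permSnoc_of_le _ (by simp only [Fin.val_last]; omega)]
  simp

lemma numInvAbove_snocPeak_of_lt (w : Perm (Fin n)) {q : Fin (n + 1)} {v : ℕ} (h : q < v) :
    numInvAbove (snocPeak w q) v = numInvAbove w (v - 1) := by
  rw [snocPeak, numInvAbove_permSnoc_of_lt _ (by simpa using h)]
  rcases le_or_gt (v - 1) n with hv | hv
  · rw [numInvAbove_permSnoc_of_le w (hv.trans_eq (Fin.val_last n).symm)]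
    simp
  · rw [numInvAbove_eq_zero_of_le _ (by omega), numInvAbove_eq_zero_of_le _ (by omega)]

lemma numInvAbove_snocPeak_eq_zero_iff (w : Perm (Fin n)) (q : Fin (n + 1)) (v : ℕ) :
    numInvAbove (snocPeak w q) v = 0 ↔ (q : ℕ) + 1 ≤ v ∧ inversionCeiling w + 1 ≤ v := by
  rcases le_or_gt v q with h | h
  · rw [numInvAbove_snocPeak_of_le w h]
    omega
  · rw [numInvAbove_snocPeak_of_lt w h, numInvAbove_eq_zero_iff]
    omega

lemma inversionCeiling_snocPeak (w : Perm (Fin n)) (q : Fin (n + 1)) :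
    inversionCeiling (snocPeak w q) = max (q : ℕ) (inversionCeiling w) + 1 :=
  inversionCeiling_eq fun v ↦ by rw [numInvAbove_snocPeak_eq_zero_iff]; omega

lemma headroom_snocPeak_of_numInvAbove_eq_zero {w : Perm (Fin n)} {q : Fin (n + 1)}
    (h : numInvAbove w q = 0) : headroom (snocPeak w q) = n + 1 - q := by
  rw [numInvAbove_eq_zero_iff] at h
  rw [headroom, inversionCeiling_snocPeak, max_eq_left h]
  omega

lemma headroom_snocPeak_of_numInvAbove_ne_zero {w : Perm (Fin n)} {q : Fin (n + 1)}
    (h : numInvAbove w q ≠ 0) : headroom (snocPeak w q) = headroom w + 1 := by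
  rw [Ne, numInvAbove_eq_zero_iff] at h
  have := inversionCeiling_le w
  rw [headroom, headroom, inversionCeiling_snocPeak, max_eq_right (by omega)]
  omega

lemma headroom_snocSubpeak {w : Perm (Fin (n + 1))} {q : Fin (n + 1)}
    (h : numInvAbove w q = 0) : headroom (snocSubpeak w q) = 1 := by
  have hceiling : inversionCeiling (snocSubpeak w q) = n + 2 := by
    refine inversionCeiling_eq fun v ↦ ?_
    have hq := q.isLt
    rw [snocSubpeak]
    rcases le_or_gt v q with hv | hv
    · rw [numInvAbove_permSnoc_of_le _ (by simpa using hv)]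
      simp only [Fin.val_castSucc]
      omega
    rw [numInvAbove_permSnoc_of_lt _ (by simpa using hv)]
    rcases le_or_gt (v - 1) n with hn | hn
    · rw [numInvAbove_permSnoc_of_le _ (by simpa using hn)]
      simp only [Fin.val_castSucc, Fin.val_last]
      omega
    · rw [numInvAbove_permSnoc_of_lt _ (by simpa using hn), numInvAbove_eq_zero_iff]
      rw [numInvAbove_eq_zero_iff] at h
      omega
  rw [headroom, hceiling]
  omega

/-- The transfer operator of the generating tree: a node labelled `h` has one child with each of
the labels `1, …, h + 1`. -/
def transfer {M : Type*} [AddCommMonoid M] (φ : ℕ → M) (h : ℕ) : M := ∑ i ∈ Icc 1 (h + 1), φ i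

lemma sum_headroom_snocPeak {M : Type*} [AddCommMonoid M] (w : Perm (Fin n)) (φ : ℕ → M) :
    ∑ q ∈ {q : Fin (n + 1) | numInvAbove w q = 0}, φ (headroom (snocPeak w q)) =
      transfer φ (headroom w) := by
  have hle := inversionCeiling_le w
  calc ∑ q ∈ {q : Fin (n + 1) | numInvAbove w q = 0}, φ (headroom (snocPeak w q))
      = ∑ q ∈ {q : Fin (n + 1) | numInvAbove w q = 0}, φ (n + 1 - q) :=
        sum_congr rfl fun q hq ↦ by
          rw [headroom_snocPeak_of_numInvAbove_eq_zero (mem_filter_univ q |>.1 hq)]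
    _ = ∑ q ∈ {q : Fin (n + 1) | inversionCeiling w ≤ (q : ℕ) ∧ (q : ℕ) < n + 1},
          φ (n + 1 - q) := by
        simp only [numInvAbove_eq_zero_iff, Fin.is_lt, and_true]
    _ = ∑ i ∈ Ico (inversionCeiling w) (n + 1), φ (n + 1 - i) :=
        sum_fin_filter_Ico le_rfl fun i ↦ φ (n + 1 - i)
    _ = transfer φ (headroom w) := by
        rw [sum_Ico_reflect φ _ (by omega), transfer, headroom]
        exact sum_congr (by ext i; simp only [mem_Ico, mem_Icc]; omega) fun _ _ ↦ rfl

end Headroom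

section UpDown

variable {n : ℕ}

lemma upDown_permSnoc (w : Perm (Fin (n + 1))) (q : Fin (n + 2)) :
    UpDown (permSnoc w q) ↔ UpDown w ∧
      if n % 2 = 0 then (w (Fin.last n) : ℕ) < q else (q : ℕ) ≤ w (Fin.last n) := by
  have hinit (i : ℕ) (hi : i < n + 1) :
      permSnoc w q ⟨i, hi.trans (Nat.lt_succ_self _)⟩ = q.succAbove (w ⟨i, hi⟩) :=
    permSnoc_castSucc w q ⟨i, hi⟩
  have hlast (hi : n + 1 < n + 2) : permSnoc w q ⟨n + 1, hi⟩ = q := permSnoc_last w q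
  have hstep (hi : n + 1 < n + 2) :
      (if n % 2 = 0 then permSnoc w q ⟨n, Nat.lt_of_succ_lt hi⟩ < permSnoc w q ⟨n + 1, hi⟩
        else permSnoc w q ⟨n + 1, hi⟩ < permSnoc w q ⟨n, Nat.lt_of_succ_lt hi⟩) ↔
      if n % 2 = 0 then (w (Fin.last n) : ℕ) < q else (q : ℕ) ≤ w (Fin.last n) := by
    rw [hinit n (Nat.lt_succ_self n), hlast, lt_succAbove_iff_val_le,
      Fin.succAbove_lt_iff_castSucc_lt]
    rfl
  refine ⟨fun h ↦ ⟨fun i hi ↦ ?_, (hstep (by omega)).1 (h n (by omega))⟩, fun ⟨hw, hq⟩ i hi ↦ ?_⟩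
  · simpa only [hinit i (by omega), hinit (i + 1) hi, Fin.succAbove_lt_succAbove_iff] using
      h i (by omega)
  · rcases Nat.lt_or_ge i n with hin | hin
    · simpa only [hinit i (by omega), hinit (i + 1) (by omega), Fin.succAbove_lt_succAbove_iff]
        using hw i (by omega)
    · obtain rfl : i = n := by omega
      exact (hstep hi).2 hq

open Classical in
/-- The up-down permutations of length `n` with exactly `k` occurrences of 321. -/
noncomputable def upDownPerms (n k : ℕ) : Finset (Perm (Fin n)) :=
  {w | UpDown w ∧ (occ321 w).ncard = k}

lemma mem_upDownPerms {k : ℕ} {w : Perm (Fin n)} :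
    w ∈ upDownPerms n k ↔ UpDown w ∧ (occ321 w).ncard = k := by
  simp [upDownPerms]

lemma permSnoc_permSnoc_mem_upDownPerms (hn : Even n) (k : ℕ) (w : Perm (Fin (n + 1)))
    (p : Fin (n + 2)) (q : Fin (n + 3)) :
    permSnoc (permSnoc w p) q ∈ upDownPerms (n + 3) k ↔
      UpDown w ∧ (w (Fin.last n) : ℕ) < p ∧ (q : ℕ) ≤ p ∧
        (occ321 w).ncard + numInvAbove w p + numInvAbove w q + (n + 1 - p) = k := by
  rw [Nat.even_iff] at hn
  rw [mem_upDownPerms, upDown_permSnoc, upDown_permSnoc, if_pos hn, if_neg (by omega),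
    permSnoc_last, ncard_occ321_permSnoc, ncard_occ321_permSnoc]
  simp only [and_assoc]
  refine and_congr_right fun _ ↦ and_congr_right fun _ ↦ and_congr_right fun hq ↦ ?_
  rw [numInvAbove_permSnoc_of_le w hq, ← add_assoc]

lemma snocPeak_mem_upDownPerms (hn : Even n) (k : ℕ) (w : Perm (Fin (n + 1))) (q : Fin (n + 2)) :
    snocPeak w q ∈ upDownPerms (n + 3) k ↔
      UpDown w ∧ (occ321 w).ncard + numInvAbove w q = k := by
  have hlast := (w (Fin.last n)).isLt
  have hq := q.isLt
  rw [snocPeak, permSnoc_permSnoc_mem_upDownPerms hn]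
  simp only [Fin.val_last, Fin.val_castSucc, numInvAbove_eq_zero_of_le w le_rfl]
  exact and_congr_right fun _ ↦ by omega

lemma snocPeak_mem_upDownPerms_zero (hn : Even n) (w : Perm (Fin (n + 1))) (q : Fin (n + 2)) :
    snocPeak w q ∈ upDownPerms (n + 3) 0 ↔ w ∈ upDownPerms (n + 1) 0 ∧ numInvAbove w q = 0 := by
  rw [snocPeak_mem_upDownPerms hn, mem_upDownPerms, Nat.add_eq_zero_iff, and_assoc]

lemma snocPeak_mem_upDownPerms_one (hn : Even n) (w : Perm (Fin (n + 1))) (q : Fin (n + 2)) :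
    snocPeak w q ∈ upDownPerms (n + 3) 1 ↔
      w ∈ upDownPerms (n + 1) 1 ∧ numInvAbove w q = 0 ∨
        w ∈ upDownPerms (n + 1) 0 ∧ numInvAbove w q = 1 := by
  rw [snocPeak_mem_upDownPerms hn, mem_upDownPerms, mem_upDownPerms, Nat.add_eq_one_iff, and_assoc,
    and_assoc, ← and_or_left, or_comm]

lemma snocSubpeak_mem_upDownPerms (hn : Even n) (k : ℕ) (w : Perm (Fin (n + 1)))
    (q : Fin (n + 1)) :
    snocSubpeak w q ∈ upDownPerms (n + 3) k ↔ UpDown w ∧ w (Fin.last n) ≠ Fin.last n ∧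
      (occ321 w).ncard + numInvAbove w n + numInvAbove w q + 1 = k := by
  have hlast := (w (Fin.last n)).isLt
  have hq := q.isLt
  rw [snocSubpeak, permSnoc_permSnoc_mem_upDownPerms hn, Ne, Fin.ext_iff]
  simp only [Fin.val_last, Fin.val_castSucc]
  exact and_congr_right fun _ ↦ by omega

lemma snocSubpeak_mem_upDownPerms_one (hn : Even n) (w : Perm (Fin (n + 1))) (q : Fin (n + 1)) :
    snocSubpeak w q ∈ upDownPerms (n + 3) 1 ↔
      w ∈ upDownPerms (n + 1) 0 ∧ w (Fin.last n) ≠ Fin.last n ∧ numInvAbove w q = 0 := by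
  have hanti : numInvAbove w n ≤ numInvAbove w q := numInvAbove_antitone w (Nat.le_of_lt_succ q.2)
  rw [snocSubpeak_mem_upDownPerms hn, mem_upDownPerms, and_assoc]
  refine and_congr_right fun _ ↦ ?_
  rw [and_left_comm]
  exact and_congr_right fun _ ↦ by omega

variable {M : Type*} [AddCommMonoid M]

/- After appending `p` and then `q ≤ p`, each of the `n + 1 - p` values above `p` is the first entry
of an occurrence of 321 ending in `p, q`; with `k ≤ 1` this leaves two choices for `p`. -/
lemma sum_upDownPerms_of_le_one (hn : Even n) {k : ℕ} (hk : k ≤ 1) (f : Perm (Fin (n + 3)) → M) :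
    ∑ w ∈ upDownPerms (n + 3) k, f w =
      ∑ r : Perm (Fin (n + 1)),
        (∑ q with snocSubpeak r q ∈ upDownPerms (n + 3) k, f (snocSubpeak r q) +
          ∑ q with snocPeak r q ∈ upDownPerms (n + 3) k, f (snocPeak r q)) := by
  classical
  let g (w : Perm (Fin (n + 3))) : M := if w ∈ upDownPerms (n + 3) k then f w else 0
  have hg (r : Perm (Fin (n + 1))) (p : Fin (n + 2)) (q : Fin (n + 3))
      (hpq : (p : ℕ) < q ∨ (p : ℕ) < n) : g (permSnoc (permSnoc r p) q) = 0 :=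
    if_neg fun hmem ↦ by
      have := (permSnoc_permSnoc_mem_upDownPerms hn k r p q).1 hmem
      omega
  have hsmall (r : Perm (Fin (n + 1))) (p : Fin n) (q : Fin (n + 3)) :
      g (permSnoc (permSnoc r p.castSucc.castSucc) q) = 0 := hg r _ q (by simp)
  have hpeak (r : Perm (Fin (n + 1))) :
      ∑ q, g (permSnoc (permSnoc r (Fin.last (n + 1))) q) = ∑ q, g (snocPeak r q) := by
    rw [Fin.sum_univ_castSucc, hg r _ _ (by simp), add_zero]
    rfl
  have hsubpeak (r : Perm (Fin (n + 1))) :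
      ∑ q, g (permSnoc (permSnoc r (Fin.last n).castSucc) q) = ∑ q, g (snocSubpeak r q) := by
    rw [Fin.sum_univ_castSucc, Fin.sum_univ_castSucc, hg r _ (Fin.last _) (by simp),
      hg r _ (Fin.last _).castSucc (by simp), add_zero, add_zero]
    rfl
  calc ∑ w ∈ upDownPerms (n + 3) k, f w = ∑ w, g w := by simp [g, sum_ite_mem]
    _ = ∑ r, ∑ p, ∑ q, g (permSnoc (permSnoc r p) q) := by
        rw [sum_perm_fin_succ, sum_perm_fin_succ]
    _ = ∑ r, (∑ q, g (snocSubpeak r q) + ∑ q, g (snocPeak r q)) := by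
        simp only [Fin.sum_univ_castSucc (n := n + 1), Fin.sum_univ_castSucc (n := n), hsmall,
          sum_const_zero, zero_add, hpeak, hsubpeak]
    _ = _ := by simp only [g, sum_filter]

lemma sum_upDownPerms_zero (hn : Even n) (f : Perm (Fin (n + 3)) → M) :
    ∑ w ∈ upDownPerms (n + 3) 0, f w =
      ∑ r ∈ upDownPerms (n + 1) 0,
        ∑ q ∈ {q : Fin (n + 2) | numInvAbove r q = 0}, f (snocPeak r q) := by
  classical
  rw [sum_upDownPerms_of_le_one hn zero_le_one, ← sum_filter_mem_and]
  simp [snocSubpeak_mem_upDownPerms hn, snocPeak_mem_upDownPerms_zero hn]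

lemma sum_upDownPerms_one (hn : Even n) (f : Perm (Fin (n + 3)) → M) :
    ∑ w ∈ upDownPerms (n + 3) 1, f w =
      ∑ r ∈ upDownPerms (n + 1) 1, ∑ q ∈ {q : Fin (n + 2) | numInvAbove r q = 0}, f (snocPeak r q) +
        ∑ r ∈ upDownPerms (n + 1) 0,
          (∑ q ∈ {q : Fin (n + 1) | r (Fin.last n) ≠ Fin.last n ∧ numInvAbove r q = 0},
              f (snocSubpeak r q) +
            ∑ q ∈ {q : Fin (n + 2) | numInvAbove r q = 1}, f (snocPeak r q)) := by
  classical
  simp only [sum_upDownPerms_of_le_one hn le_rfl, sum_add_distrib,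
    snocSubpeak_mem_upDownPerms_one hn, snocPeak_mem_upDownPerms_one hn, filter_or]
  have hdisj (r : Perm (Fin (n + 1))) :
      Disjoint ({q | r ∈ upDownPerms (n + 1) 1 ∧ numInvAbove r q = 0} : Finset (Fin (n + 2)))
        ({q | r ∈ upDownPerms (n + 1) 0 ∧ numInvAbove r q = 1} : Finset (Fin (n + 2))) :=
    disjoint_filter.2 fun q _ h h' ↦ by omega
  simp only [sum_union (hdisj _), sum_add_distrib, sum_filter_mem_and]
  rw [add_left_comm]

end UpDown

section HeadroomSum

variable {n : ℕ} {M : Type*} [AddCommMonoid M]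

lemma sum_headroom_snocSubpeak (w : Perm (Fin (n + 1))) (φ : ℕ → M) :
    ∑ q ∈ {q : Fin (n + 1) | numInvAbove w q = 0}, φ (headroom (snocSubpeak w q)) =
      headroom w • φ 1 := by
  have hcard : #{q : Fin (n + 1) | numInvAbove w q = 0} = headroom w := by
    simpa only [numInvAbove_eq_zero_iff, headroom, Fin.is_lt, and_true] using
      card_fin_filter_Ico (a := inversionCeiling w) (le_refl (n + 1))
  rw [← hcard, ← sum_const]
  exact sum_congr rfl fun q hq ↦ by rw [headroom_snocSubpeak ((mem_filter_univ q).1 hq)]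

lemma sum_headroom_snocPeak_of_numInvAbove_eq_one (w : Perm (Fin n)) (φ : ℕ → M) :
    ∑ q ∈ {q : Fin (n + 1) | numInvAbove w q = 1}, φ (headroom (snocPeak w q)) =
      #{q : Fin (n + 1) | numInvAbove w q = 1} • φ (headroom w + 1) := by
  rw [← sum_const]
  refine sum_congr rfl fun q hq ↦ ?_
  rw [headroom_snocPeak_of_numInvAbove_ne_zero (by simp [(mem_filter_univ q).1 hq])]

lemma numInvAbove_snocPeak_eq_one_iff {w : Perm (Fin n)} {q : Fin (n + 1)}
    (hq : numInvAbove w q = 0) (v : ℕ) :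
    numInvAbove (snocPeak w q) v = 1 ↔ q = Fin.last n ∧ inversionCeiling w ≤ v ∧ v < n + 1 := by
  have hqn := q.isLt
  rw [Fin.ext_iff, Fin.val_last, ← numInvAbove_eq_zero_iff]
  rcases le_or_gt v q with hv | hv
  · rw [numInvAbove_snocPeak_of_le w hv]
    omega
  · have hzero : numInvAbove w (v - 1) = 0 :=
      Nat.eq_zero_of_le_zero (hq ▸ numInvAbove_antitone w (by omega))
    rw [numInvAbove_snocPeak_of_lt w hv, hzero]
    omega

lemma card_numInvAbove_snocPeak_eq_one {w : Perm (Fin n)} {q : Fin (n + 1)}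
    (hq : numInvAbove w q = 0) :
    #{v : Fin (n + 3) | numInvAbove (snocPeak w q) v = 1} =
      if q = Fin.last n then headroom w + 1 else 0 := by
  simp only [numInvAbove_snocPeak_eq_one_iff hq]
  split_ifs with h
  · have hle := inversionCeiling_le w
    simp only [h, true_and, headroom, card_fin_filter_Ico (show n + 1 ≤ n + 3 by omega)]
    omega
  · simp [h]

/-- The sum of `φ (headroom w)` over the up-down permutations `w` of length `n` with exactly `k`
occurrences of 321. -/
noncomputable def headroomSum (n k : ℕ) (φ : ℕ → M) : M := ∑ w ∈ upDownPerms n k, φ (headroom w)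

lemma headroomSum_add_three_zero (hn : Even n) (φ : ℕ → M) :
    headroomSum (n + 3) 0 φ = headroomSum (n + 1) 0 (transfer φ) := by
  simp only [headroomSum, sum_upDownPerms_zero hn, sum_headroom_snocPeak]

lemma UpDown.apply_last_ne_last (hn : Even n) {w : Perm (Fin (n + 3))} (hw : UpDown w) :
    w (Fin.last (n + 2)) ≠ Fin.last (n + 2) := by
  have hdescent := hw (n + 1) (Nat.lt_succ_self _)
  rw [if_neg (by rw [Nat.even_iff] at hn; omega)] at hdescent
  exact (hdescent.trans_le (Fin.le_last _)).ne

lemma sum_card_smul_headroom_add_one (hn : Even n) (φ : ℕ → M) :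
    ∑ r ∈ upDownPerms (n + 3) 0,
        #{q : Fin (n + 4) | numInvAbove r q = 1} • φ (headroom r + 1) =
      headroomSum (n + 1) 0 fun h ↦ (h + 1) • φ 2 := by
  rw [sum_upDownPerms_zero hn]
  refine sum_congr rfl fun s _ ↦ ?_
  have hlast : numInvAbove s (Fin.last (n + 1)) = 0 := numInvAbove_eq_zero_of_le s le_rfl
  rw [sum_eq_single_of_mem (Fin.last (n + 1)) (by simpa using hlast) fun q hq hne ↦ by
    rw [card_numInvAbove_snocPeak_eq_one ((mem_filter_univ q).1 hq), if_neg hne, zero_smul]]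
  rw [card_numInvAbove_snocPeak_eq_one hlast, if_pos rfl,
    headroom_snocPeak_of_numInvAbove_eq_zero hlast]
  simp

lemma headroomSum_add_five_one (hn : Even n) (φ : ℕ → M) :
    headroomSum (n + 5) 1 φ = headroomSum (n + 3) 1 (transfer φ) +
      ((headroomSum (n + 3) 0 fun h ↦ h • φ 1) +
        headroomSum (n + 1) 0 fun h ↦ (h + 1) • φ 2) := by
  have hsubpeak (r) (hr : r ∈ upDownPerms (n + 3) 0) :
      ∑ q ∈ {q : Fin (n + 3) | r (Fin.last (n + 2)) ≠ Fin.last (n + 2) ∧ numInvAbove r q = 0},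
        φ (headroom (snocSubpeak r q)) = headroom r • φ 1 := by
    simp only [ne_eq, (mem_upDownPerms.1 hr).1.apply_last_ne_last hn, not_false_eq_true, true_and,
      sum_headroom_snocSubpeak]
  rw [headroomSum, sum_upDownPerms_one (hn.add even_two), sum_add_distrib, sum_congr rfl hsubpeak]
  simp only [sum_headroom_snocPeak, sum_headroom_snocPeak_of_numInvAbove_eq_one,
    sum_card_smul_headroom_add_one hn, headroomSum]

lemma upDownPerms_one_zero : upDownPerms 1 0 = {1} := by
  refine eq_singleton_iff_unique_mem.2 ⟨mem_upDownPerms.2 ⟨fun i h ↦ by omega, ?_⟩,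
    fun _ _ ↦ Subsingleton.elim _ _⟩
  have hempty : occ321 (1 : Perm (Fin 1)) = ∅ := Set.eq_empty_of_forall_notMem fun t ht ↦
    ht.1.ne (Subsingleton.elim _ _)
  rw [hempty, Set.ncard_empty]

lemma upDownPerms_three_one : upDownPerms 3 1 = ∅ := by
  refine eq_empty_of_forall_notMem fun w hw ↦ ?_
  obtain ⟨hupDown, hcard⟩ := mem_upDownPerms.1 hw
  obtain ⟨⟨i, j, k⟩, hij : i < j, hjk : j < k, -, hdescent : w j < w i⟩ :=
    Set.nonempty_of_ncard_ne_zero (hcard.trans_ne one_ne_zero)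
  obtain rfl : i = 0 := by omega
  obtain rfl : j = 1 := by omega
  exact hdescent.not_gt (hupDown 0 (by omega))

lemma headroom_one : headroom (1 : Perm (Fin n)) = n := by
  have hceiling : inversionCeiling (1 : Perm (Fin n)) = 0 := inversionCeiling_eq fun v ↦ by
    have hnone : numInvAbove (1 : Perm (Fin n)) v = 0 :=
      card_eq_zero.2 <| filter_eq_empty_iff.2 fun _ _ ⟨hpos, hval, _⟩ ↦ hpos.not_gt hval
    simp only [hnone, Nat.zero_le]
  rw [headroom, hceiling, Nat.sub_zero]

lemma headroomSum_one_zero (φ : ℕ → M) : headroomSum 1 0 φ = φ 1 := by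
  rw [headroomSum, upDownPerms_one_zero, sum_singleton, headroom_one]

lemma headroomSum_three_one (φ : ℕ → M) : headroomSum 3 1 φ = 0 := by
  rw [headroomSum, upDownPerms_three_one, sum_empty]

end HeadroomSum

section Catalan

open PowerSeries

lemma add_two_mul_catalan_succ (n : ℕ) :
    (n + 2) * catalan (n + 1) = 2 * (2 * n + 1) * catalan n := by
  refine Nat.eq_of_mul_eq_mul_left (show 0 < n + 1 from n.succ_pos) ?_
  have hrec := Nat.succ_mul_centralBinom_succ n
  rw [← succ_mul_catalan_eq_centralBinom n, ← succ_mul_catalan_eq_centralBinom (n + 1)] at hrec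
  linear_combination hrec

lemma catalan_mul_factorial_mul_factorial_succ (n : ℕ) :
    catalan n * (n.factorial * (n + 1).factorial) = (2 * n).factorial := by
  have hchoose := Nat.choose_mul_factorial_mul_factorial (Nat.le_mul_of_pos_left n two_pos)
  rw [← Nat.centralBinom_eq_two_mul_choose, ← succ_mul_catalan_eq_centralBinom, two_mul,
    Nat.add_sub_cancel] at hchoose
  rw [two_mul, ← hchoose, Nat.factorial_succ]
  ring

lemma catalanSeries_pow_succ (h : ℕ) :
    catalanSeries ^ (h + 1) = (∑ i ∈ Icc 1 (h + 1), catalanSeries ^ (i + 1)) * X + 1 := by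
  induction h with
  | zero => simpa using catalanSeries_sq_mul_X_add_one.symm
  | succ h ih =>
    rw [sum_Icc_succ_top (by omega), add_mul, add_right_comm (_ * _), ← ih]
    calc catalanSeries ^ (h + 1 + 1)
        = catalanSeries ^ (h + 1) * (catalanSeries ^ 2 * X + 1) := by
          rw [catalanSeries_sq_mul_X_add_one, pow_succ]
      _ = _ := by ring

/-- The convolution of the Catalan sequences shifted by `a` and by `b`. -/
def catalanConv (a b n : ℕ) : ℕ := ∑ p ∈ antidiagonal n, catalan (p.1 + a) * catalan (p.2 + b)

lemma catalanConv_zero_zero (n : ℕ) : catalanConv 0 0 n = catalan (n + 1) :=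
  (catalan_succ' n).symm

lemma catalanConv_succ_left (a b n : ℕ) :
    catalanConv a b (n + 1) = catalan a * catalan (n + 1 + b) + catalanConv (a + 1) b n := by
  simp only [catalanConv, Nat.sum_antidiagonal_succ, zero_add, add_assoc, add_comm 1 a]

lemma catalanConv_succ_right (a b n : ℕ) :
    catalanConv a b (n + 1) = catalan (n + 1 + a) * catalan b + catalanConv a (b + 1) n := by
  simp only [catalanConv, Nat.sum_antidiagonal_succ', zero_add, add_assoc, add_comm 1 b]

lemma catalanConv_one_zero_add (n : ℕ) :
    catalanConv 1 0 n + catalan (n + 1) = catalan (n + 2) := by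
  have hleft := catalanConv_succ_left 0 0 n
  rw [catalanConv_zero_zero, catalan_zero, one_mul] at hleft
  rw [hleft, add_zero, zero_add, add_comm]

lemma catalanConv_one_one_add (n : ℕ) :
    catalanConv 1 1 n + 2 * catalan (n + 2) = catalan (n + 3) := by
  have hright := catalanConv_succ_right 1 0 n
  rw [catalan_zero, mul_one, zero_add] at hright
  linear_combination catalanConv_one_zero_add (n + 1) - hright

lemma catalanConv_two_one_add (n : ℕ) :
    catalanConv 2 1 n + 2 * catalan (n + 3) + catalan (n + 2) = catalan (n + 4) := by
  have hleft := catalanConv_succ_left 1 1 n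
  rw [catalan_one, one_mul] at hleft
  linear_combination catalanConv_one_one_add (n + 1) - hleft

end Catalan

section BallotNumber

open PowerSeries

/-- The ballot number `[X ^ k] C ^ (h + 1)`, where `C` is the generating series of the Catalan
numbers; it counts the nodes `k` levels below a node labelled `h` of the generating tree. -/
noncomputable def ballotNumber (k h : ℕ) : ℕ := coeff k (catalanSeries ^ (h + 1))

lemma transfer_ballotNumber (k : ℕ) : transfer (ballotNumber k) = ballotNumber (k + 1) := by
  ext h
  simp only [ballotNumber, transfer, catalanSeries_pow_succ h, map_add, map_sum, coeff_succ_mul_X,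
    coeff_one, Nat.succ_ne_zero, if_false, add_zero]

lemma ballotNumber_zero_left (h : ℕ) : ballotNumber 0 h = 1 := by
  simp [ballotNumber]

lemma ballotNumber_one_left (h : ℕ) : ballotNumber 1 h = h + 1 := by
  rw [← zero_add 1, ← transfer_ballotNumber]
  simp [transfer, ballotNumber_zero_left]

lemma ballotNumber_one_right (k : ℕ) : ballotNumber k 1 = catalan (k + 1) :=
  calc ballotNumber k 1 = transfer (ballotNumber k) 0 := by simp [transfer]
    _ = catalan (k + 1) := by rw [transfer_ballotNumber]; simp [ballotNumber]

lemma ballotNumber_two_right (k : ℕ) : catalan (k + 1) + ballotNumber k 2 = catalan (k + 2) :=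
  calc catalan (k + 1) + ballotNumber k 2 = transfer (ballotNumber k) 1 := by
        simp [transfer, sum_Icc_succ_top, ballotNumber_one_right]
    _ = catalan (k + 2) := by rw [transfer_ballotNumber, ballotNumber_one_right]

lemma headroomSum_ballotNumber_zero (n k : ℕ) :
    headroomSum n k (ballotNumber 0) =
      Nat.card {w : Perm (Fin n) // UpDown w ∧ (occ321 w).ncard = k} := by
  simp only [headroomSum, ballotNumber_zero_left, sum_const, smul_eq_mul, mul_one]
  exact (Nat.subtype_card _ fun _ ↦ mem_upDownPerms).symm

lemma headroomSum_zero_ballotNumber (m k : ℕ) :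
    headroomSum (2 * m + 1) 0 (ballotNumber k) = catalan (m + k + 1) := by
  induction m generalizing k with
  | zero => rw [mul_zero, zero_add, headroomSum_one_zero, ballotNumber_one_right, zero_add]
  | succ m ih =>
    rw [show 2 * (m + 1) + 1 = 2 * m + 3 by ring, headroomSum_add_three_zero (even_two_mul m),
      transfer_ballotNumber, ih, add_right_comm m 1 k, add_assoc m k 1]

lemma headroomSum_zero_add_one_smul {M : Type*} [AddCommMonoid M] (m : ℕ) (c : M) :
    (headroomSum (2 * m + 1) 0 fun h ↦ (h + 1) • c) = catalan (m + 2) • c := by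
  rw [← headroomSum_zero_ballotNumber m 1]
  simp only [headroomSum, ballotNumber_one_left, sum_smul]

lemma headroomSum_zero_smul_add {M : Type*} [AddCommMonoid M] (m : ℕ) (c : M) :
    (headroomSum (2 * m + 1) 0 fun h ↦ h • c) + catalan (m + 1) • c = catalan (m + 2) • c := by
  rw [← headroomSum_zero_add_one_smul, ← headroomSum_zero_ballotNumber m 0]
  simp only [headroomSum, ballotNumber_zero_left, sum_smul, ← sum_add_distrib, add_smul]

lemma headroomSum_one_ballotNumber_add (m k : ℕ) :
    headroomSum (2 * m + 5) 1 (ballotNumber k) + 2 * (catalan (m + 2) * catalan (k + 1)) =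
      headroomSum (2 * m + 3) 1 (ballotNumber (k + 1)) +
        (catalan (m + 3) * catalan (k + 1) + catalan (m + 2) * catalan (k + 2)) := by
  have hsubpeak := headroomSum_zero_smul_add (m + 1) (ballotNumber k 1)
  rw [show 2 * (m + 1) + 1 = 2 * m + 3 by ring] at hsubpeak
  rw [headroomSum_add_five_one (even_two_mul m), transfer_ballotNumber,
    headroomSum_zero_add_one_smul, ← ballotNumber_two_right k, ← ballotNumber_one_right k]
  simp only [smul_eq_mul] at hsubpeak ⊢
  linear_combination hsubpeak

lemma headroomSum_one_eq_catalanConv (m k : ℕ) :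
    headroomSum (2 * m + 5) 1 (ballotNumber k) + 2 * catalanConv 2 (k + 1) m =
      catalanConv 3 (k + 1) m + catalanConv 2 (k + 2) m := by
  induction m generalizing k with
  | zero =>
    have hstep := headroomSum_one_ballotNumber_add 0 k
    simpa [headroomSum_three_one, catalanConv] using hstep
  | succ m ih =>
    have hstep := headroomSum_one_ballotNumber_add (m + 1) k
    rw [show 2 * (m + 1) + 3 = 2 * m + 5 by ring] at hstep
    simp only [catalanConv_succ_right _ _ m]
    linear_combination hstep + ih (k + 1)

lemma headroomSum_one_ballotNumber_zero (m : ℕ) :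
    headroomSum (2 * m + 3) 1 (ballotNumber 0) + 6 * catalan (m + 3) =
      2 * catalan (m + 4) + catalan (m + 2) := by
  cases m with
  | zero =>
    have hfour : catalan 4 = 14 := by rw [catalan_eq_centralBinom_div]; rfl
    simp [headroomSum_three_one, catalan_two, catalan_three, hfour]
  | succ m =>
    have h := headroomSum_one_eq_catalanConv m 0
    have htwo := catalanConv_two_one_add m
    have htwo' := catalanConv_two_one_add (m + 1)
    have hleft := catalanConv_succ_left 2 1 m
    have hright := catalanConv_succ_right 2 1 m
    rw [catalan_two] at hleft
    rw [catalan_one, mul_one] at hright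
    rw [show 2 * (m + 1) + 3 = 2 * m + 5 by ring]
    linear_combination h - hleft - hright + 2 * htwo' - 2 * htwo

lemma mul_headroomSum_one_ballotNumber_zero (m : ℕ) :
    (m + 5) * (m + 4) * headroomSum (2 * m + 3) 1 (ballotNumber 0) =
      3 * (3 * m + 7) * m * catalan (m + 2) := by
  have h := headroomSum_one_ballotNumber_zero m
  have hrec := add_two_mul_catalan_succ (m + 2)
  have hrec' := add_two_mul_catalan_succ (m + 3)
  zify at h hrec hrec' ⊢
  linear_combination (m + 5 : ℤ) * (m + 4) * h + (2 * (m + 4) : ℤ) * hrec' +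
    (8 * (m : ℤ) + 28 - 6 * (m + 5)) * hrec

end BallotNumber

theorem stmt14 (m : ℕ) (hm : 1 ≤ m) :
    Nat.card {w : Equiv.Perm (Fin (2 * m + 1)) // UpDown w ∧ (occ321 w).ncard = 1} *
        (Nat.factorial (m + 1) * Nat.factorial (m + 4)) =
      3 * (3 * m + 4) * (m - 1) * Nat.factorial (2 * m + 2) := by
  obtain ⟨n, rfl⟩ : ∃ n, m = n + 1 := ⟨m - 1, (Nat.sub_add_cancel hm).symm⟩
  have hfactorial : (n + 5).factorial = (n + 5) * (n + 4) * (n + 3).factorial := by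
    rw [Nat.factorial_succ, Nat.factorial_succ, mul_assoc]
  rw [← headroomSum_ballotNumber_zero, Nat.add_sub_cancel,
    show 2 * (n + 1) + 2 = 2 * (n + 2) by ring, ← catalan_mul_factorial_mul_factorial_succ]
  calc headroomSum (2 * n + 3) 1 (ballotNumber 0) * ((n + 2).factorial * (n + 5).factorial)
      = (n + 5) * (n + 4) * headroomSum (2 * n + 3) 1 (ballotNumber 0) *
          ((n + 2).factorial * (n + 3).factorial) := by rw [hfactorial]; ring
    _ = 3 * (3 * (n + 1) + 4) * n *
          (catalan (n + 2) * ((n + 2).factorial * (n + 3).factorial)) := by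
        rw [mul_headroomSum_one_ballotNumber_zero]; ring
end

section
/- For every m ≥ 2, the number of alternating (up-down) permutations of length 2m containing the pattern 123 exactly once is 10·(2m)! / ((m-2)!(m+3)!). -/
section BallotSets

open Finset

/-- Ballot sequences of length `N` ending at height `h`, each encoded by the set `S ⊆ range N` of
times of its up-steps; its height at time `t` is `2 * Nat.count (· ∈ S) t - t`. -/
def ballotSets (N h : ℕ) : Finset (Finset ℕ) :=
  {S ∈ (range N).powerset | (∀ t ≤ N, t ≤ 2 * Nat.count (· ∈ S) t) ∧
    2 * Nat.count (· ∈ S) N = N + h}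

/-- The up-steps from height `1` to height `2` of the lattice path with up-steps `S`. -/
def ascentsToTwo (S : Finset ℕ) : Finset ℕ := {t ∈ S | 2 * Nat.count (· ∈ S) t = t + 1}

variable {N h m : ℕ} {S : Finset ℕ}

lemma mem_ballotSets : S ∈ ballotSets N h ↔ S ⊆ range N ∧
    (∀ t ≤ N, t ≤ 2 * Nat.count (· ∈ S) t) ∧ 2 * Nat.count (· ∈ S) N = N + h := by
  simp [ballotSets]

lemma count_mem_insert_of_le {t : ℕ} (ht : t ≤ N) :
    Nat.count (· ∈ insert N S) t = Nat.count (· ∈ S) t := by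
  simp only [Nat.count_eq_card_filter_range]
  congr 1
  exact filter_congr fun x hx => by simp [((mem_range.1 hx).trans_le ht).ne]

lemma mem_ballotSets_succ_iff (hS : S ⊆ range N) :
    S ∈ ballotSets (N + 1) h ↔ S ∈ ballotSets N (h + 1) := by
  have hN : N ∉ S := fun hN => by simpa using hS hN
  have hcount : Nat.count (· ∈ S) (N + 1) = Nat.count (· ∈ S) N := by simp [Nat.count_succ, hN]
  rw [mem_ballotSets, mem_ballotSets, hcount]
  refine ⟨fun ⟨_, hle, _⟩ => ⟨hS, fun t ht => hle t (by lia), by lia⟩,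
    fun ⟨_, hle, _⟩ => ⟨hS.trans (by simp), fun t ht => ?_, by lia⟩⟩
  rcases ht.lt_or_eq with ht | rfl
  · exact hle t (by lia)
  · lia

lemma insert_mem_ballotSets_succ_iff (hS : S ⊆ range N) :
    insert N S ∈ ballotSets (N + 1) (h + 1) ↔ S ∈ ballotSets N h := by
  have hcount : Nat.count (· ∈ insert N S) (N + 1) = Nat.count (· ∈ S) N + 1 := by
    rw [Nat.count_succ, count_mem_insert_of_le le_rfl, if_pos (mem_insert_self N S)]
  have hsub : insert N S ⊆ range (N + 1) := range_add_one ▸ insert_subset_insert N hS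
  rw [mem_ballotSets, mem_ballotSets, hcount]
  refine ⟨fun ⟨_, hle, _⟩ => ⟨hS, fun t ht => ?_, by lia⟩,
    fun ⟨_, hle, _⟩ => ⟨hsub, fun t ht => ?_, by lia⟩⟩
  · exact count_mem_insert_of_le ht ▸ hle t (by lia)
  · rcases ht.lt_or_eq with ht | rfl
    · exact (count_mem_insert_of_le (Nat.le_of_lt_succ ht)).symm ▸ hle t (by lia)
    · lia

lemma insert_notMem_ballotSets_succ_zero : insert N S ∉ ballotSets (N + 1) 0 := by
  intro hS
  obtain ⟨-, hle, hend⟩ := mem_ballotSets.1 hS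
  have hN := hle N (by lia)
  rw [Nat.count_succ, if_pos (mem_insert_self N S)] at hend
  lia

variable {M : Type*} [AddCommMonoid M] (f : Finset ℕ → M)

lemma sum_ballotSets_succ (N h : ℕ) :
    ∑ S ∈ ballotSets (N + 1) h, f S = ∑ S ∈ ballotSets N (h + 1), f S +
      ∑ S ∈ (range N).powerset with insert N S ∈ ballotSets (N + 1) h, f (insert N S) := by
  have hfilter (N h : ℕ) : {S ∈ (range N).powerset | S ∈ ballotSets N h} = ballotSets N h :=
    filter_mem_eq_inter.trans (inter_eq_right.2 (filter_subset _ _))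
  conv_lhs => rw [← hfilter, sum_filter, range_add_one, sum_powerset_insert notMem_range_self,
    ← sum_filter, ← sum_filter]
  rw [← hfilter N, filter_congr fun S hS => mem_ballotSets_succ_iff (mem_powerset.1 hS)]

lemma sum_ballotSets_succ_zero (N : ℕ) :
    ∑ S ∈ ballotSets (N + 1) 0, f S = ∑ S ∈ ballotSets N 1, f S := by
  simp [sum_ballotSets_succ, insert_notMem_ballotSets_succ_zero]

lemma sum_ballotSets_succ_succ (N h : ℕ) :
    ∑ S ∈ ballotSets (N + 1) (h + 1), f S =
      ∑ S ∈ ballotSets N (h + 2), f S + ∑ S ∈ ballotSets N h, f (insert N S) := by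
  rw [sum_ballotSets_succ]
  congr 2
  ext S
  rw [mem_filter, mem_powerset]
  exact ⟨fun ⟨hS, hins⟩ => (insert_mem_ballotSets_succ_iff hS).1 hins, fun hS =>
    have hsub := (mem_ballotSets.1 hS).1
    ⟨hsub, (insert_mem_ballotSets_succ_iff hsub).2 hS⟩⟩

lemma card_ballotSets_succ_zero (N : ℕ) : #(ballotSets (N + 1) 0) = #(ballotSets N 1) := by
  simpa only [card_eq_sum_ones] using sum_ballotSets_succ_zero (fun _ => 1) N

lemma card_ballotSets_succ_succ (N h : ℕ) :
    #(ballotSets (N + 1) (h + 1)) = #(ballotSets N (h + 2)) + #(ballotSets N h) := by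
  simpa only [card_eq_sum_ones] using sum_ballotSets_succ_succ (fun _ => 1) N h

lemma ballotSets_eq_empty (hNh : N < h) : ballotSets N h = ∅ := by
  refine eq_empty_of_forall_notMem fun S hS => ?_
  have hend := (mem_ballotSets.1 hS).2.2
  have hle := Nat.count_le (p := (· ∈ S)) (n := N)
  lia

lemma card_ballotSets_mul_factorial (N d h : ℕ) (hN : N = 2 * d + h) :
    #(ballotSets N h) * (d.factorial * (d + h + 1).factorial) = (h + 1) * N.factorial := by
  induction N generalizing d h with
  | zero =>
    obtain ⟨rfl, rfl⟩ : d = 0 ∧ h = 0 := by lia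
    decide
  | succ N ih =>
    match h, d with
    | 0, 0 => lia
    | 0, d + 1 =>
      obtain rfl : N = 2 * d + 1 := by lia
      have hup := ih d 1 rfl
      rw [card_ballotSets_succ_zero, Nat.factorial_succ d, Nat.factorial_succ (2 * d + 1)]
      linear_combination (d + 1) * hup
    | h + 1, 0 =>
      obtain rfl : N = h := by lia
      have hdown := ih 0 N (by lia)
      rw [card_ballotSets_succ_succ, ballotSets_eq_empty (by lia), card_empty,
        Nat.factorial_succ N, Nat.factorial_succ (0 + (N + 1))]
      rw [show 0 + N + 1 = 0 + (N + 1) by ring] at hdown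
      linear_combination (N + 2) * hdown
    | h + 1, d + 1 =>
      obtain rfl : N = 2 * (d + 1) + h := by lia
      have hdown := ih (d + 1) h rfl
      have hup := ih d (h + 2) (by lia)
      rw [card_ballotSets_succ_succ, Nat.factorial_succ (2 * (d + 1) + h)]
      rw [show d + (h + 2) + 1 = d + 1 + h + 1 + 1 by ring] at hup
      rw [show d + 1 + (h + 1) + 1 = d + 1 + h + 1 + 1 by ring]
      simp only [Nat.factorial_succ (d + 1 + h + 1), Nat.factorial_succ d] at hup hdown ⊢
      linear_combination (d + 1) * hup + (d + h + 3) * hdown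

lemma card_ascentsToTwo_insert (hS : S ⊆ range N) :
    #(ascentsToTwo (insert N S)) =
      #(ascentsToTwo S) + if 2 * Nat.count (· ∈ S) N = N + 1 then 1 else 0 := by
  have hN : N ∉ S := fun hN => by simpa using hS hN
  have hS' : {t ∈ S | 2 * Nat.count (· ∈ insert N S) t = t + 1} = ascentsToTwo S :=
    filter_congr fun t ht => by rw [count_mem_insert_of_le (mem_range.1 (hS ht)).le]
  rw [ascentsToTwo, filter_insert, hS', count_mem_insert_of_le le_rfl]
  split_ifs
  · exact card_insert_of_notMem fun h => hN (mem_filter.1 h).1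
  · rfl

/-- The number of pairs of a ballot sequence of length `N` ending at height `h` and one of its
up-steps from height `1` to height `2`. -/
def numMarkedBallots (N h : ℕ) : ℕ := ∑ S ∈ ballotSets N h, #(ascentsToTwo S)

lemma numMarkedBallots_zero (h : ℕ) : numMarkedBallots 0 h = 0 := by
  refine sum_eq_zero fun S hS => ?_
  have hS : S = ∅ := by simpa using (mem_ballotSets.1 hS).1
  simp [hS, ascentsToTwo]

lemma numMarkedBallots_succ_zero (N : ℕ) :
    numMarkedBallots (N + 1) 0 = numMarkedBallots N 1 :=
  sum_ballotSets_succ_zero _ N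

lemma numMarkedBallots_succ_succ (N h : ℕ) :
    numMarkedBallots (N + 1) (h + 1) = numMarkedBallots N (h + 2) + numMarkedBallots N h +
      if h = 1 then #(ballotSets N 1) else 0 := by
  have hins : ∀ S ∈ ballotSets N h, #(ascentsToTwo (insert N S)) =
      #(ascentsToTwo S) + if h = 1 then 1 else 0 := fun S hS => by
    obtain ⟨hsub, -, hend⟩ := mem_ballotSets.1 hS
    simp only [card_ascentsToTwo_insert hsub, hend, Nat.add_left_cancel_iff]
  rw [numMarkedBallots, sum_ballotSets_succ_succ, sum_congr rfl hins, sum_add_distrib, ← add_assoc]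
  split_ifs with hh
  · rw [hh, ← card_eq_sum_ones]
    rfl
  · rw [sum_const_zero]
    rfl

lemma numMarkedBallots_eq (N : ℕ) :
    numMarkedBallots N 0 = #(ballotSets N 4) ∧
    numMarkedBallots N 1 = #(ballotSets N 3) + #(ballotSets N 5) ∧
    ∀ h, numMarkedBallots N (h + 2) =
      #(ballotSets N (h + 2)) + #(ballotSets N (h + 4)) + #(ballotSets N (h + 6)) := by
  induction N with
  | zero => simp [numMarkedBallots_zero, ballotSets_eq_empty]
  | succ N ih =>
    obtain ⟨h0, h1, h2⟩ := ih
    simp only [numMarkedBallots_succ_zero, numMarkedBallots_succ_succ, card_ballotSets_succ_succ]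
    refine ⟨by lia, by grind, fun h => ?_⟩
    rcases h with _ | h <;> grind

lemma numMarkedBallots_two_mul_zero_mul_factorial (hm : 2 ≤ m) :
    numMarkedBallots (2 * m) 0 * ((m - 2).factorial * (m + 3).factorial) =
      5 * (2 * m).factorial := by
  have hcard := card_ballotSets_mul_factorial (2 * m) (m - 2) 4 (by lia)
  rwa [← (numMarkedBallots_eq (2 * m)).1, show m - 2 + 4 + 1 = m + 3 by lia] at hcard

end BallotSets

section UniqueOccurrence

open Equiv

variable {α : Type*} [LinearOrder α] {m k : ℕ} {f : ℕ → α}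

/-- The positions `a, b, c` carry an occurrence of the pattern 321 in `f 0, …, f (n - 1)`. -/
def IsOcc321 (n : ℕ) (f : ℕ → α) (a b c : ℕ) : Prop :=
  a < b ∧ b < c ∧ c < n ∧ f c < f b ∧ f b < f a

/-- The sequence `f 0 > f 1 < f 2 > ⋯ > f (2 * m - 1)` is down-up. -/
structure IsDownUp (m : ℕ) (f : ℕ → α) : Prop where
  lt_left {i : ℕ} : i < m → f (2 * i + 1) < f (2 * i)
  lt_right {i : ℕ} : i + 1 < m → f (2 * i + 1) < f (2 * i + 2)

/-- The sequence `f 0, …, f (2 * m - 1)` is down-up and contains the pattern 321 exactly once, at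
the positions `2 * k, 2 * k + 1, 2 * k + 3`. -/
structure IsDownUpOnceAt (m k : ℕ) (f : ℕ → α) : Prop extends IsDownUp m f where
  isOcc321_iff (a b c : ℕ) : IsOcc321 (2 * m) f a b c ↔ a = 2 * k ∧ b = 2 * k + 1 ∧
    c = 2 * (k + 1) + 1

/-- The two rows `x` and `y` form a standard Young tableau of shape `2 × m` in which `x (k + 1)`
lies between `y (k - 1)` and `y k`. -/
structure IsMarkedTableau (m k : ℕ) (x y : ℕ → α) : Prop where
  succ_lt : k + 1 < m
  strictMonoOn_fst : StrictMonoOn x (Set.Iio m)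
  strictMonoOn_snd : StrictMonoOn y (Set.Iio m)
  lt {i : ℕ} : i < m → x i < y i
  mark_lt : x (k + 1) < y k
  lt_mark {i : ℕ} : i < k → y i < x (k + 1)

lemma IsMarkedTableau.congr {x x' y y' : ℕ → α} (h : IsMarkedTableau m k x y)
    (hx : Set.EqOn x x' (Set.Iio m)) (hy : Set.EqOn y y' (Set.Iio m)) :
    IsMarkedTableau m k x' y' where
  succ_lt := h.succ_lt
  strictMonoOn_fst := h.strictMonoOn_fst.congr hx
  strictMonoOn_snd := h.strictMonoOn_snd.congr hy
  lt hi := hx hi ▸ hy hi ▸ h.lt hi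
  mark_lt := hx h.succ_lt ▸ hy (k.lt_succ_self.trans h.succ_lt) ▸ h.mark_lt
  lt_mark {i} hi := hx h.succ_lt ▸ hy (show i < m by have := h.succ_lt; lia) ▸ h.lt_mark hi

/-- The values of `f` at odd positions, with those at `2 * k + 1` and `2 * k + 3` interchanged. -/
def swappedOdd (k : ℕ) (f : ℕ → α) (i : ℕ) : α := f (2 * swap k (k + 1) i + 1)

lemma swap_succ_lt {i : ℕ} (hk : k + 1 < m) (hi : i < m) : swap k (k + 1) i < m := by
  rw [swap_apply_def]
  split_ifs <;> lia

lemma swap_succ_lt_swap_succ {i j : ℕ} (hij : i < j) (hne : i ≠ k ∨ j ≠ k + 1) :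
    swap k (k + 1) i < swap k (k + 1) j := by
  simp only [swap_apply_def]
  split_ifs <;> lia

lemma IsDownUpOnceAt.succ_lt (h : IsDownUpOnceAt m k f) : k + 1 < m := by
  obtain ⟨-, -, hlt, -, -⟩ := (h.isOcc321_iff (2 * k) _ _).2 ⟨rfl, rfl, rfl⟩
  lia

lemma IsDownUpOnceAt.unique {k' : ℕ} (h : IsDownUpOnceAt m k f) (h' : IsDownUpOnceAt m k' f) :
    k = k' := by
  have := ((h'.isOcc321_iff _ _ _).1 ((h.isOcc321_iff _ _ _).2 ⟨rfl, rfl, rfl⟩)).1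
  lia

lemma IsDownUpOnceAt.even_lt_even (h : IsDownUpOnceAt m k f) (hf : Set.InjOn f (Set.Iio (2 * m)))
    {i j : ℕ} (hij : i < j) (hj : j < m) : f (2 * i) < f (2 * j) := by
  by_contra! hle
  have hlt : f (2 * j) < f (2 * i) :=
    hle.lt_of_ne fun heq => by
      simpa [hij.ne'] using hf (Set.mem_Iio.2 (by lia)) (Set.mem_Iio.2 (by lia)) heq
  have hocc := (h.isOcc321_iff (2 * i) (2 * j) (2 * j + 1)).1
    ⟨by lia, by lia, by lia, h.lt_left hj, hlt⟩
  lia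

lemma IsDownUpOnceAt.odd_lt_odd (h : IsDownUpOnceAt m k f) (hf : Set.InjOn f (Set.Iio (2 * m)))
    {i j : ℕ} (hij : i < j) (hj : j < m) (hne : i ≠ k ∨ j ≠ k + 1) :
    f (2 * i + 1) < f (2 * j + 1) := by
  by_contra! hle
  have hlt : f (2 * j + 1) < f (2 * i + 1) :=
    hle.lt_of_ne fun heq => by
      simpa [hij.ne'] using hf (Set.mem_Iio.2 (by lia)) (Set.mem_Iio.2 (by lia)) heq
  have hocc := (h.isOcc321_iff (2 * i) (2 * i + 1) (2 * j + 1)).1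
    ⟨by lia, by lia, by lia, hlt, h.lt_left (hij.trans hj)⟩
  lia

lemma IsDownUpOnceAt.isMarkedTableau (h : IsDownUpOnceAt m k f)
    (hf : Set.InjOn f (Set.Iio (2 * m))) :
    IsMarkedTableau m k (swappedOdd k f) (fun i => f (2 * i)) := by
  have hk := h.succ_lt
  obtain ⟨-, -, -, hlt_mid, hmid_lt⟩ := (h.isOcc321_iff _ _ _).2 ⟨rfl, rfl, rfl⟩
  exact
  { succ_lt := hk
    strictMonoOn_fst i _ j hj hij := by
      by_cases hne : i ≠ k ∨ j ≠ k + 1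
      · exact h.odd_lt_odd hf (swap_succ_lt_swap_succ hij hne) (swap_succ_lt hk hj)
          (by simp only [swap_apply_def]; split_ifs <;> lia)
      · obtain ⟨rfl, rfl⟩ := not_or.1 hne |>.imp not_not.1 not_not.1
        simpa [swappedOdd] using hlt_mid
    strictMonoOn_snd i _ j hj hij := h.even_lt_even hf hij hj
    lt {i} hi := by
      rcases eq_or_ne i k with rfl | hik
      · simpa [swappedOdd] using hlt_mid.trans hmid_lt
      rcases eq_or_ne i (k + 1) with rfl | hik'
      · simpa [swappedOdd] using hmid_lt.trans (h.even_lt_even hf k.lt_succ_self hi)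
      · simpa [swappedOdd, swap_apply_of_ne_of_ne hik hik'] using h.lt_left hi
    mark_lt := by simpa [swappedOdd] using hmid_lt
    lt_mark {i} hi := by
      by_contra! hle
      have hlt : f (2 * k + 1) < f (2 * i) := by
        refine lt_of_le_of_ne (by simpa [swappedOdd] using hle) fun heq => ?_
        have := hf (Set.mem_Iio.2 (by lia)) (Set.mem_Iio.2 (by lia)) heq
        lia
      have hocc := (h.isOcc321_iff _ _ _).1 ⟨by lia, by lia, by lia, hlt_mid, hlt⟩
      lia }

lemma IsMarkedTableau.odd_lt_odd (h : IsMarkedTableau m k (swappedOdd k f) (fun i => f (2 * i)))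
    {i j : ℕ} (hij : i < j) (hj : j < m) (hne : i ≠ k ∨ j ≠ k + 1) :
    f (2 * i + 1) < f (2 * j + 1) := by
  simpa [swappedOdd] using h.strictMonoOn_fst (swap_succ_lt h.succ_lt (hij.trans hj))
    (swap_succ_lt h.succ_lt hj) (swap_succ_lt_swap_succ hij hne)

lemma IsMarkedTableau.odd_lt_even (h : IsMarkedTableau m k (swappedOdd k f) (fun i => f (2 * i)))
    {i j : ℕ} (hij : i ≤ j) (hj : j < m) : f (2 * i + 1) < f (2 * j) := by
  have hi := hij.trans_lt hj
  refine lt_of_lt_of_le ?_ (h.strictMonoOn_snd.monotoneOn hi hj hij)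
  rcases eq_or_ne i k with rfl | hik
  · simpa [swappedOdd] using h.mark_lt
  rcases eq_or_ne i (k + 1) with rfl | hik'
  · have hk : k < m := by lia
    simpa [swappedOdd] using (h.lt hk).trans (h.strictMonoOn_snd hk hi k.lt_succ_self)
  · simpa [swappedOdd, swap_apply_of_ne_of_ne hik hik'] using h.lt hi

lemma IsMarkedTableau.odd_of_inversion
    (h : IsMarkedTableau m k (swappedOdd k f) (fun i => f (2 * i)))
    {a b : ℕ} (hab : a < b) (hb : b < 2 * m) (hlt : f b < f a) :
    Odd b ∧ (Even a ∨ a = 2 * k + 1 ∧ b = 2 * (k + 1) + 1) := by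
  obtain ⟨i, rfl | rfl⟩ := a.even_or_odd' <;> obtain ⟨j, rfl | rfl⟩ := b.even_or_odd'
  · exact (hlt.asymm (h.strictMonoOn_snd (show i < m by lia) (show j < m by lia) (by lia))).elim
  · exact ⟨odd_two_mul_add_one j, .inl (even_two_mul i)⟩
  · exact (hlt.asymm (h.odd_lt_even (by lia) (by lia))).elim
  · refine ⟨odd_two_mul_add_one j, .inr ?_⟩
    by_contra hne
    exact hlt.asymm (h.odd_lt_odd (by lia) (by lia) (by lia))

lemma IsMarkedTableau.isDownUpOnceAt
    (h : IsMarkedTableau m k (swappedOdd k f) (fun i => f (2 * i))) : IsDownUpOnceAt m k f := by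
  have hk := h.succ_lt
  refine ⟨⟨h.odd_lt_even le_rfl, fun {i} hi => h.odd_lt_even i.le_succ hi⟩, fun a b c => ⟨?_, ?_⟩⟩
  · rintro ⟨hab, hbc, hc, hcb, hba⟩
    obtain ⟨hb_odd, -⟩ := h.odd_of_inversion hab (hbc.trans hc) hba
    obtain ⟨rfl, rfl⟩ := (h.odd_of_inversion hbc hc hcb).2.resolve_left (by simpa using hb_odd)
    obtain ⟨i, rfl⟩ := (h.odd_of_inversion hab (by lia) hba).2.resolve_right (by lia)
    have hki : k ≤ i := by
      by_contra! hik
      exact hba.asymm (by simpa [swappedOdd, two_mul] using h.lt_mark hik)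
    lia
  · rintro ⟨rfl, rfl, rfl⟩
    exact ⟨by lia, by lia, by lia,
      by simpa [swappedOdd] using h.strictMonoOn_fst (show k < m by lia) hk k.lt_succ_self,
      h.odd_lt_even le_rfl (by lia)⟩

lemma IsDownUp.exists_isDownUpOnceAt (h : IsDownUp m f) {a b c : ℕ} (hb : Odd b)
    (hocc : ∀ a' b' c', IsOcc321 (2 * m) f a' b' c' ↔ a' = a ∧ b' = b ∧ c' = c) :
    ∃ k, IsDownUpOnceAt m k f := by
  obtain ⟨hab, hbc, hc, hcb, hba⟩ := (hocc a b c).2 ⟨rfl, rfl, rfl⟩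
  obtain ⟨k, rfl⟩ := hb
  have ha : 2 * k = a :=
    ((hocc _ _ _).1 ⟨by lia, hbc, hc, hcb, h.lt_left (by lia)⟩).1
  obtain ⟨l, rfl | rfl⟩ := c.even_or_odd'
  · have hl := ((hocc _ _ _).1 ⟨hab, by lia, by lia, (h.lt_left (by lia)).trans hcb, hba⟩).2.2
    lia
  have hl : l = k + 1 := by
    by_contra hne
    obtain ⟨l, rfl⟩ : ∃ j, l = j + 1 := ⟨l - 1, by lia⟩
    rcases lt_or_ge (f (2 * l + 1)) (f (2 * k + 1)) with hlt | hle
    · have := ((hocc _ _ _).1 ⟨hab, by lia, by lia, hlt, hba⟩).2.2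
      lia
    · have := ((hocc _ _ _).1
        ⟨by lia, by lia, hc, hcb.trans_le hle, h.lt_left (by lia)⟩).2.1
      lia
  exact ⟨k, h, by subst ha hl; exact hocc⟩

end UniqueOccurrence

section TableauOfSet

open Finset

variable {m k i j t : ℕ} {S : Finset ℕ}

lemma lt_card_toFinset_mem (hi : i < #S) (hf : (Set.ofPred (· ∈ S)).Finite) :
    i < #hf.toFinset := by
  rwa [show hf.toFinset = S by ext; simp]

lemma infinite_notMem (S : Finset ℕ) : (Set.ofPred (· ∉ S)).Infinite :=
  S.finite_toSet.infinite_compl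

lemma nth_mem_mem (hi : i < #S) : Nat.nth (· ∈ S) i ∈ S :=
  Nat.nth_mem i (lt_card_toFinset_mem hi)

lemma nth_notMem_notMem (S : Finset ℕ) (i : ℕ) : Nat.nth (· ∉ S) i ∉ S :=
  Nat.nth_mem_of_infinite (infinite_notMem S) i

lemma nth_mem_ne_nth_notMem (hi : i < #S) : Nat.nth (· ∈ S) i ≠ Nat.nth (· ∉ S) j :=
  fun heq => nth_notMem_notMem S j (heq ▸ nth_mem_mem hi)

lemma strictMonoOn_nth_mem (S : Finset ℕ) : StrictMonoOn (Nat.nth (· ∈ S)) (Set.Iio #S) :=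
  fun _ _ _ hj hij => Nat.nth_lt_nth' hij (lt_card_toFinset_mem hj)

lemma count_mem_eq_card {N : ℕ} (hS : S ⊆ range N) : Nat.count (· ∈ S) N = #S := by
  rw [Nat.count_eq_card_filter_range, filter_mem_eq_inter, inter_eq_right.2 hS]

lemma count_mem_add_count_notMem (S : Finset ℕ) (t : ℕ) :
    Nat.count (· ∈ S) t + Nat.count (· ∉ S) t = t := by
  simp only [Nat.count_eq_card_filter_range]
  rw [card_filter_add_card_filter_not, card_range]

lemma mem_and_count_mem_eq_iff : t ∈ S ∧ Nat.count (· ∈ S) t = i ↔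
    i < #S ∧ Nat.nth (· ∈ S) i = t := by
  constructor
  · rintro ⟨ht, rfl⟩
    have hcard := Nat.count_lt_card (p := (· ∈ S)) S.finite_toSet ht
    exact ⟨by simpa using hcard, Nat.nth_count ht⟩
  · rintro ⟨hi, rfl⟩
    exact ⟨nth_mem_mem hi, Nat.count_nth (lt_card_toFinset_mem hi)⟩

lemma nth_mem_lt_nth_notMem_iff (hi : i < #S) :
    Nat.nth (· ∈ S) i < Nat.nth (· ∉ S) j ↔ Nat.nth (· ∈ S) i ≤ i + j := by
  have hne := nth_mem_ne_nth_notMem (j := j) hi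
  have hcount := count_mem_add_count_notMem S (Nat.nth (· ∈ S) i)
  rw [Nat.count_nth (lt_card_toFinset_mem hi)] at hcount
  rw [← hne.le_iff_lt, ← Nat.count_le_iff_le_nth (infinite_notMem S)]
  lia

lemma mem_ballotSets_two_mul_zero_iff (hS : S ⊆ range (2 * m)) (hcard : #S = m) :
    S ∈ ballotSets (2 * m) 0 ↔ ∀ i < m, Nat.nth (· ∈ S) i ≤ 2 * i := by
  subst hcard
  rw [mem_ballotSets, count_mem_eq_card hS]
  refine ⟨fun ⟨_, hle, _⟩ i hi => ?_, fun hle => ⟨hS, fun t ht => ?_, rfl⟩⟩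
  · have hnth := hle _ (mem_range.1 (hS (nth_mem_mem hi))).le
    rwa [Nat.count_nth (lt_card_toFinset_mem hi)] at hnth
  · by_contra! hlt
    have hi : Nat.count (· ∈ S) t < #S := by lia
    have hnth : Nat.nth (· ∈ S) (Nat.count (· ∈ S) t) < t := (hle _ hi).trans_lt hlt
    have hcount := Nat.count_strict_mono (nth_mem_mem hi) hnth
    rw [Nat.count_nth (lt_card_toFinset_mem hi)] at hcount
    exact hcount.false

lemma mem_ascentsToTwo_iff :
    2 * k + 1 ∈ ascentsToTwo S ↔ k + 1 < #S ∧ Nat.nth (· ∈ S) (k + 1) = 2 * k + 1 := by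
  rw [← mem_and_count_mem_eq_iff, ascentsToTwo, mem_filter]
  exact and_congr_right' (by lia)

lemma isMarkedTableau_nth_iff (hS : S ⊆ range (2 * m)) (hcard : #S = m) :
    IsMarkedTableau m k (Nat.nth (· ∈ S)) (Nat.nth (· ∉ S)) ↔
      S ∈ ballotSets (2 * m) 0 ∧ 2 * k + 1 ∈ ascentsToTwo S := by
  rw [mem_ballotSets_two_mul_zero_iff hS hcard, mem_ascentsToTwo_iff]
  subst hcard
  constructor
  · intro h
    refine ⟨fun i hi => two_mul i ▸ (nth_mem_lt_nth_notMem_iff hi).1 (h.lt hi), h.succ_lt, ?_⟩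
    have hle := (nth_mem_lt_nth_notMem_iff h.succ_lt).1 h.mark_lt
    rcases k with _ | k
    · have hpos := strictMonoOn_nth_mem S (zero_lt_one.trans h.succ_lt) h.succ_lt zero_lt_one
      lia
    · have hlt := (nth_mem_lt_nth_notMem_iff h.succ_lt).not.1 (h.lt_mark k.lt_succ_self).not_gt
      lia
  · rintro ⟨hle, hk, hmark⟩
    exact
    { succ_lt := hk
      strictMonoOn_fst := strictMonoOn_nth_mem S
      strictMonoOn_snd := (Nat.nth_strictMono (infinite_notMem S)).strictMonoOn _
      lt {i} hi := (nth_mem_lt_nth_notMem_iff hi).2 (two_mul i ▸ hle i hi)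
      mark_lt := (nth_mem_lt_nth_notMem_iff hk).2 (by lia)
      lt_mark {i} hi := by
        refine (nth_mem_ne_nth_notMem hk).lt_or_gt.resolve_left fun hlt => ?_
        have := (nth_mem_lt_nth_notMem_iff hk).1 hlt
        lia }

lemma nth_eq_of_strictMonoOn {p : ℕ → Prop} {g : ℕ → ℕ} {n : ℕ} (hg : StrictMonoOn g (Set.Iio m))
    (hgn : ∀ i < m, g i < n) (hp : ∀ a < n, p a ↔ ∃ i < m, g i = a) (hi : i < m) :
    Nat.nth p i = g i := by
  classical
  have hcount : Nat.count p (g i) = i := by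
    have hbelow : {a ∈ range (g i) | p a} = (range i).image g := by
      ext a
      simp only [mem_filter, mem_range, mem_image]
      constructor
      · rintro ⟨ha, hpa⟩
        obtain ⟨j, hj, rfl⟩ := (hp a (ha.trans (hgn i hi))).1 hpa
        exact ⟨j, (hg.lt_iff_lt hj hi).1 ha, rfl⟩
      · rintro ⟨j, hji, rfl⟩
        have hj := hji.trans hi
        exact ⟨hg hj hi hji, (hp _ (hgn j hj)).2 ⟨j, hj, rfl⟩⟩
    rw [Nat.count_eq_card_filter_range, hbelow, card_image_of_injOn, card_range]
    exact hg.injOn.mono fun j hj => (mem_range.1 hj).trans hi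
  have hnth := Nat.nth_count ((hp _ (hgn i hi)).2 ⟨i, hi, rfl⟩)
  rwa [hcount] at hnth

end TableauOfSet

section PermutationsAsSequences

open Equiv

variable {m n : ℕ} {w : Perm (Fin n)}

/-- The permutation `w` of `Fin n` extended to `ℕ` by the identity, so that its entries form a
sequence of natural numbers. -/
def natPerm (w : Perm (Fin n)) : Perm ℕ := w.extendDomain Fin.equivSubtype

lemma natPerm_val (w : Perm (Fin n)) (i : Fin n) : natPerm w i = w i :=
  Perm.extendDomain_apply_image w Fin.equivSubtype i

lemma natPerm_lt (w : Perm (Fin n)) {i : ℕ} (hi : i < n) : natPerm w i < n :=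
  natPerm_val w ⟨i, hi⟩ ▸ (w ⟨i, hi⟩).isLt

lemma eq_of_eqOn_natPerm {w' : Perm (Fin n)} (h : Set.EqOn (natPerm w) (natPerm w') (Set.Iio n)) :
    w = w' :=
  Equiv.ext fun i => Fin.ext <| by simpa only [natPerm_val] using h i.isLt

lemma isDownUp_natPerm_iff {w : Perm (Fin (2 * m))} : IsDownUp m (natPerm w) ↔ DownUp w := by
  have hlt_iff {i j : ℕ} (hi : i < 2 * m) (hj : j < 2 * m) :
      natPerm w i < natPerm w j ↔ w ⟨i, hi⟩ < w ⟨j, hj⟩ := by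
    rw [Fin.lt_def, ← natPerm_val, ← natPerm_val]
  refine ⟨fun h i hi => ?_, fun h => ⟨fun {i} hi => ?_, fun {i} hi => ?_⟩⟩
  · simp only [← hlt_iff]
    obtain ⟨i, rfl | rfl⟩ := i.even_or_odd'
    · simpa using h.lt_left (by lia)
    · simpa [Nat.add_mod] using h.lt_right (by lia)
  · exact (hlt_iff _ _).2 (by simpa using h (2 * i) (by lia))
  · exact (hlt_iff _ _).2 (by simpa [Nat.add_mod] using h (2 * i + 1) (by lia))

lemma isOcc321_natPerm_iff {a b c : Fin n} :
    IsOcc321 n (natPerm w) a b c ↔ (a, b, c) ∈ occ321 w := by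
  simp [IsOcc321, occ321, natPerm_val]

lemma occ321_eq_singleton_iff {t : Fin n × Fin n × Fin n} : occ321 w = {t} ↔
    ∀ a b c, IsOcc321 n (natPerm w) a b c ↔ a = t.1 ∧ b = t.2.1 ∧ c = t.2.2 := by
  constructor
  · rintro h a b c
    by_cases habc : a < n ∧ b < n ∧ c < n
    · obtain ⟨ha, hb, hc⟩ := habc
      simpa [h, Prod.ext_iff, Fin.ext_iff] using
        isOcc321_natPerm_iff (w := w) (a := ⟨a, ha⟩) (b := ⟨b, hb⟩) (c := ⟨c, hc⟩)
    · exact ⟨fun ⟨hab, hbc, hc, _⟩ => by lia, fun _ => by lia⟩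
  · intro h
    ext ⟨a, b, c⟩
    rw [← isOcc321_natPerm_iff, h]
    simp [Prod.ext_iff, Fin.ext_iff]

lemma exists_isDownUpOnceAt_natPerm_iff {w : Perm (Fin (2 * m))} :
    (∃ k, IsDownUpOnceAt m k (natPerm w)) ↔
      DownUp w ∧ ∃ t, occ321 w = {t} ∧ Odd (t.2.1 : ℕ) := by
  constructor
  · rintro ⟨k, h⟩
    have hk := h.succ_lt
    refine ⟨isDownUp_natPerm_iff.1 h.toIsDownUp,
      (⟨2 * k, by lia⟩, ⟨2 * k + 1, by lia⟩, ⟨2 * (k + 1) + 1, by lia⟩),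
      occ321_eq_singleton_iff.2 h.isOcc321_iff, odd_two_mul_add_one k⟩
  · rintro ⟨hw, t, ht, hodd⟩
    exact (isDownUp_natPerm_iff.2 hw).exists_isDownUpOnceAt hodd (occ321_eq_singleton_iff.1 ht)

lemma exists_natPerm_eq {x y : ℕ → ℕ} (hx : Set.InjOn x (Set.Iio m))
    (hy : Set.InjOn y (Set.Iio m)) (hxm : ∀ i < m, x i < 2 * m) (hym : ∀ i < m, y i < 2 * m)
    (hxy : ∀ i < m, ∀ j < m, x i ≠ y j) :
    ∃ w : Perm (Fin (2 * m)), ∀ i < m, natPerm w (2 * i) = y i ∧ natPerm w (2 * i + 1) = x i := by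
  let g (i : ℕ) : ℕ := if i % 2 = 0 then y (i / 2) else x (i / 2)
  have hg (i : Fin (2 * m)) : g i < 2 * m := by
    have hi : (i : ℕ) / 2 < m := by lia
    unfold g
    split_ifs
    exacts [hym _ hi, hxm _ hi]
  have hinj : Function.Injective fun i : Fin (2 * m) => (⟨g i, hg i⟩ : Fin (2 * m)) := by
    intro i j hij
    have hi : (i : ℕ) / 2 < m := by lia
    have hj : (j : ℕ) / 2 < m := by lia
    replace hij : g i = g j := congrArg Fin.val hij
    unfold g at hij
    split_ifs at hij
    · have := hy hi hj hij
      lia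
    · exact (hxy _ hj _ hi hij.symm).elim
    · exact (hxy _ hi _ hj hij).elim
    · have := hx hi hj hij
      lia
  refine ⟨Equiv.ofBijective _ (Finite.injective_iff_bijective.1 hinj), fun i hi => ⟨?_, ?_⟩⟩
  · rw [natPerm_val _ ⟨2 * i, by lia⟩]
    simp [g]
  · rw [natPerm_val _ ⟨2 * i + 1, by lia⟩]
    simp [g, Nat.add_mod, show (2 * i + 1) / 2 = i by lia]

end PermutationsAsSequences

section OddValues

open Equiv Finset

variable {m k : ℕ} {w : Perm (Fin (2 * m))}

/-- The set of entries of `w` at odd positions. -/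
def oddValues (w : Perm (Fin (2 * m))) : Finset ℕ :=
  (range m).image fun i => natPerm w (2 * i + 1)

lemma mem_oddValues {a : ℕ} : a ∈ oddValues w ↔ ∃ i < m, natPerm w (2 * i + 1) = a := by
  simp [oddValues]

lemma mem_oddValues_iff_swappedOdd {a : ℕ} (hk : k + 1 < m) :
    a ∈ oddValues w ↔ ∃ i < m, swappedOdd k (natPerm w) i = a := by
  rw [mem_oddValues]
  constructor <;> rintro ⟨i, hi, rfl⟩ <;>
    exact ⟨swap k (k + 1) i, swap_succ_lt hk hi, by simp [swappedOdd]⟩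

lemma notMem_oddValues {a : ℕ} (ha : a < 2 * m) :
    a ∉ oddValues w ↔ ∃ i < m, natPerm w (2 * i) = a := by
  rw [mem_oddValues]
  constructor
  · intro h
    obtain ⟨p, hp⟩ := w.surjective ⟨a, ha⟩
    have hpa : natPerm w p = a := by rw [natPerm_val, hp]
    obtain ⟨i, hi | hi⟩ := (p : ℕ).even_or_odd'
    · exact ⟨i, by lia, hi ▸ hpa⟩
    · exact (h ⟨i, by lia, hi ▸ hpa⟩).elim
  · rintro ⟨i, -, rfl⟩ ⟨j, -, heq⟩
    have := (natPerm w).injective heq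
    lia

lemma oddValues_subset_range (w : Perm (Fin (2 * m))) : oddValues w ⊆ range (2 * m) :=
  image_subset_iff.2 fun i hi => mem_range.2 <| natPerm_lt w <| by have := mem_range.1 hi; lia

lemma card_oddValues (w : Perm (Fin (2 * m))) : #(oddValues w) = m := by
  rw [oddValues, card_image_of_injective _ fun i j hij => by
    simpa using (natPerm w).injective hij, card_range]

lemma IsDownUpOnceAt.isMarkedTableau_natPerm (h : IsDownUpOnceAt m k (natPerm w)) :
    IsMarkedTableau m k (swappedOdd k (natPerm w)) fun i => natPerm w (2 * i) :=
  h.isMarkedTableau (natPerm w).injective.injOn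

lemma IsDownUpOnceAt.eqOn_nth_mem_oddValues (h : IsDownUpOnceAt m k (natPerm w)) :
    Set.EqOn (Nat.nth (· ∈ oddValues w)) (swappedOdd k (natPerm w)) (Set.Iio m) := fun _ =>
  nth_eq_of_strictMonoOn h.isMarkedTableau_natPerm.strictMonoOn_fst
    (fun _ hi => natPerm_lt w (by have := swap_succ_lt h.succ_lt hi; lia))
    (fun _ _ => mem_oddValues_iff_swappedOdd h.succ_lt)

lemma IsDownUpOnceAt.eqOn_nth_notMem_oddValues (h : IsDownUpOnceAt m k (natPerm w)) :
    Set.EqOn (Nat.nth (· ∉ oddValues w)) (fun i => natPerm w (2 * i)) (Set.Iio m) := fun _ =>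
  nth_eq_of_strictMonoOn h.isMarkedTableau_natPerm.strictMonoOn_snd
    (fun _ hi => natPerm_lt w (by lia)) (fun _ => notMem_oddValues)

lemma IsDownUpOnceAt.oddValues_mem_ballotSets (h : IsDownUpOnceAt m k (natPerm w)) :
    oddValues w ∈ ballotSets (2 * m) 0 ∧ 2 * k + 1 ∈ ascentsToTwo (oddValues w) :=
  (isMarkedTableau_nth_iff (oddValues_subset_range w) (card_oddValues w)).1 <|
    h.isMarkedTableau_natPerm.congr h.eqOn_nth_mem_oddValues.symm h.eqOn_nth_notMem_oddValues.symm

lemma IsDownUpOnceAt.eq_of_oddValues_eq {w' : Perm (Fin (2 * m))}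
    (h : IsDownUpOnceAt m k (natPerm w)) (h' : IsDownUpOnceAt m k (natPerm w'))
    (heq : oddValues w = oddValues w') : w = w' := by
  refine eq_of_eqOn_natPerm fun p hp => ?_
  obtain ⟨i, rfl | rfl⟩ := p.even_or_odd' <;>
    have hi : i < m := by have := Set.mem_Iio.1 hp; lia
  · exact (h.eqOn_nth_notMem_oddValues hi).symm.trans (heq ▸ h'.eqOn_nth_notMem_oddValues hi)
  · have hi' := swap_succ_lt h.succ_lt hi
    have hodd : swappedOdd k (natPerm w) (swap k (k + 1) i) =
        swappedOdd k (natPerm w') (swap k (k + 1) i) :=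
      (h.eqOn_nth_mem_oddValues hi').symm.trans (heq ▸ h'.eqOn_nth_mem_oddValues hi')
    simpa [swappedOdd] using hodd

lemma exists_oddValues_eq {S : Finset ℕ} (hS : S ∈ ballotSets (2 * m) 0)
    (hk : 2 * k + 1 ∈ ascentsToTwo S) :
    ∃ w : Perm (Fin (2 * m)), IsDownUpOnceAt m k (natPerm w) ∧ oddValues w = S := by
  obtain ⟨hsub, -, hend⟩ := mem_ballotSets.1 hS
  have hcount := count_mem_add_count_notMem S (2 * m)
  have hcard : #S = m := by
    rw [count_mem_eq_card hsub] at hend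
    lia
  have htab := (isMarkedTableau_nth_iff hsub hcard).2 ⟨hS, hk⟩
  have hswap {i : ℕ} (hi : i < m) : swap k (k + 1) i < #S := hcard ▸ swap_succ_lt htab.succ_lt hi
  obtain ⟨w, hw⟩ := exists_natPerm_eq (m := m)
    (x := fun i => Nat.nth (· ∈ S) (swap k (k + 1) i)) (y := Nat.nth (· ∉ S))
    (fun i hi j hj hij => (swap k (k + 1)).injective <|
      (strictMonoOn_nth_mem S).injOn (hswap hi) (hswap hj) hij)
    htab.strictMonoOn_snd.injOn
    (fun i hi => mem_range.1 (hsub (nth_mem_mem (hswap hi))))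
    (fun i hi => Nat.nth_lt_of_lt_count (by lia))
    (fun i hi j _ => nth_mem_ne_nth_notMem (hswap hi))
  refine ⟨w, (htab.congr (fun i hi => ?_) fun i hi => (hw i hi).1.symm).isDownUpOnceAt, ?_⟩
  · rw [swappedOdd, (hw _ (swap_succ_lt htab.succ_lt hi)).2, swap_apply_self]
  · refine eq_of_subset_of_card_le (fun a ha => ?_) (by rw [card_oddValues, hcard])
    obtain ⟨i, hi, rfl⟩ := mem_oddValues.1 ha
    exact (hw i hi).2 ▸ nth_mem_mem (hswap hi)

lemma ncard_exists_isDownUpOnceAt (m : ℕ) :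
    {w : Perm (Fin (2 * m)) | ∃ k, IsDownUpOnceAt m k (natPerm w)}.ncard =
      numMarkedBallots (2 * m) 0 := by
  rw [numMarkedBallots, ← card_sigma, ← Set.ncard_coe_finset]
  choose! k hk using fun (w : Perm (Fin (2 * m))) (hw : ∃ k, IsDownUpOnceAt m k (natPerm w)) => hw
  refine Set.ncard_congr (fun w _ => ⟨oddValues w, 2 * k w + 1⟩) (fun w hw => ?_)
    (fun w w' hw hw' heq => ?_) fun ⟨S, t⟩ hSt => ?_
  · exact mem_sigma.2 (hk w hw).oddValues_mem_ballotSets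
  · obtain ⟨hvalues, hkk⟩ : oddValues w = oddValues w' ∧ k w = k w' := by simpa using heq
    exact (hk w hw).eq_of_oddValues_eq (hkk ▸ hk w' hw') hvalues
  · obtain ⟨hS, ht⟩ := mem_sigma.1 (mem_coe.1 hSt)
    obtain ⟨j, rfl⟩ : ∃ j, t = 2 * j + 1 :=
      ⟨Nat.count (· ∈ S) t - 1, by have := (mem_filter.1 ht).2; lia⟩
    obtain ⟨w, hw, rfl⟩ := exists_oddValues_eq hS ht
    exact ⟨w, ⟨j, hw⟩, by rw [hw.unique (hk w ⟨j, hw⟩)]⟩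

end OddValues

section Symmetry

open Equiv

variable {m n : ℕ} {w : Perm (Fin n)}

lemma downUp_revPerm_mul_iff : DownUp (Fin.revPerm * w) ↔ UpDown w := by
  simp [DownUp, UpDown]

lemma occ321_revPerm_mul (w : Perm (Fin n)) : occ321 (Fin.revPerm * w) = occ123 w := by
  simp [occ321, occ123, and_comm]

lemma downUp_mul_revPerm_iff {w : Perm (Fin (2 * m))} :
    DownUp (w * Fin.revPerm) ↔ UpDown w := by
  constructor <;> intro h i hi <;> have hrev := h (2 * m - 2 - i) (by lia) <;>
    simp only [Perm.mul_apply, Fin.revPerm_apply, Fin.rev,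
      show 2 * m - (i + 1) = 2 * m - 2 - i + 1 by lia,
      show 2 * m - (i + 1 + 1) = 2 * m - 2 - i by lia,
      show 2 * m - (2 * m - 2 - i + 1) = i + 1 by lia,
      show 2 * m - (2 * m - 2 - i + 1 + 1) = i by lia,
      show (2 * m - 2 - i) % 2 = 0 ↔ i % 2 = 0 by lia] at hrev ⊢ <;>
    exact hrev

lemma mem_occ321_mul_revPerm_iff {a b c : Fin n} :
    (a, b, c) ∈ occ321 (w * Fin.revPerm) ↔ (c.rev, b.rev, a.rev) ∈ occ123 w := by
  simp [occ321, occ123, and_left_comm]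

lemma occ321_mul_revPerm_eq_singleton_iff {a b c : Fin n} :
    occ321 (w * Fin.revPerm) = {(a, b, c)} ↔ occ123 w = {(c.rev, b.rev, a.rev)} := by
  simp only [Set.ext_iff, Prod.forall, mem_occ321_mul_revPerm_iff, Set.mem_singleton_iff,
    Prod.mk_inj]
  constructor <;> intro h a' b' c' <;> have hrev := h c'.rev b'.rev a'.rev <;>
    grind [Fin.rev_rev]

lemma exists_isDownUpOnceAt_revPerm_mul_iff {w : Perm (Fin (2 * m))} :
    (∃ k, IsDownUpOnceAt m k (natPerm (Fin.revPerm * w))) ↔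
      UpDown w ∧ ∃ t, occ123 w = {t} ∧ Odd (t.2.1 : ℕ) := by
  rw [exists_isDownUpOnceAt_natPerm_iff, downUp_revPerm_mul_iff, occ321_revPerm_mul]

lemma even_val_rev_iff (b : Fin (2 * m)) : Even (b.rev : ℕ) ↔ Odd (b : ℕ) := by
  rw [Fin.val_rev]
  grind

lemma exists_isDownUpOnceAt_mul_revPerm_iff {w : Perm (Fin (2 * m))} :
    (∃ k, IsDownUpOnceAt m k (natPerm (w * Fin.revPerm))) ↔
      UpDown w ∧ ∃ t, occ123 w = {t} ∧ Even (t.2.1 : ℕ) := by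
  rw [exists_isDownUpOnceAt_natPerm_iff, downUp_mul_revPerm_iff]
  refine and_congr_right' ⟨?_, ?_⟩
  · rintro ⟨⟨a, b, c⟩, hocc, hodd⟩
    exact ⟨(c.rev, b.rev, a.rev), occ321_mul_revPerm_eq_singleton_iff.1 hocc,
      (even_val_rev_iff b).2 hodd⟩
  · rintro ⟨⟨a, b, c⟩, hocc, heven⟩
    exact ⟨(c.rev, b.rev, a.rev), occ321_mul_revPerm_eq_singleton_iff.2 (by simpa using hocc),
      (even_val_rev_iff _).1 (by simpa using heven)⟩

lemma ncard_exists_isDownUpOnceAt_equiv (e : Perm (Perm (Fin (2 * m)))) :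
    {w | ∃ k, IsDownUpOnceAt m k (natPerm (e w))}.ncard = numMarkedBallots (2 * m) 0 :=
  (Set.ncard_preimage_of_injective_subset_range e.injective (by simp)).trans
    (ncard_exists_isDownUpOnceAt m)

lemma ncard_upDown_occ123_ncard_eq_one (m : ℕ) :
    {w : Perm (Fin (2 * m)) | UpDown w ∧ (occ123 w).ncard = 1}.ncard =
      2 * numMarkedBallots (2 * m) 0 := by
  have hodd := ncard_exists_isDownUpOnceAt_equiv (m := m) (Equiv.mulLeft Fin.revPerm)
  have heven := ncard_exists_isDownUpOnceAt_equiv (m := m) (Equiv.mulRight Fin.revPerm)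
  simp only [coe_mulLeft, exists_isDownUpOnceAt_revPerm_mul_iff] at hodd
  simp only [coe_mulRight, exists_isDownUpOnceAt_mul_revPerm_iff] at heven
  have hdisj : Disjoint {w : Perm (Fin (2 * m)) | UpDown w ∧ ∃ t, occ123 w = {t} ∧ Odd (t.2.1 : ℕ)}
      {w | UpDown w ∧ ∃ t, occ123 w = {t} ∧ Even (t.2.1 : ℕ)} := by
    refine Set.disjoint_left.2 fun w ⟨_, t, ht, hodd⟩ ⟨_, t', ht', heven⟩ => ?_
    obtain rfl : t = t' := Set.singleton_injective (ht.symm.trans ht')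
    exact Nat.not_even_iff_odd.2 hodd heven
  rw [two_mul (numMarkedBallots _ _), ← congrArg₂ (· + ·) hodd heven, ← Set.ncard_union_eq hdisj]
  congr 1
  ext w
  simp only [Set.mem_ofPred_eq, Set.mem_union, ← and_or_left, ← exists_or, Nat.even_or_odd,
    or_comm, and_true, Set.ncard_eq_one]

end Symmetry

theorem stmt15 (m : ℕ) (hm : 2 ≤ m) :
    Nat.card {w : Equiv.Perm (Fin (2 * m)) // UpDown w ∧ (occ123 w).ncard = 1} *
        (Nat.factorial (m - 2) * Nat.factorial (m + 3)) =
      10 * Nat.factorial (2 * m) := by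
  have hcard : Nat.card {w : Equiv.Perm (Fin (2 * m)) // UpDown w ∧ (occ123 w).ncard = 1} =
      2 * numMarkedBallots (2 * m) 0 :=
    (Nat.card_coe_set_eq _).trans (ncard_upDown_occ123_ncard_eq_one m)
  rw [hcard]
  linear_combination 2 * numMarkedBallots_two_mul_zero_mul_factorial hm
end
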